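/- Let H > 0 and 0 < r < 1/(2H). Let D(r) ⊆ ℝ² be the open disk of center 0 and radius r, set z₀ = (1/(2H), 0), and define C = {p ∈ D(r) : |p − z₀| = 1/(2H)}, D⁻ = {p ∈ D(r) : |p − z₀| > 1/(2H)} (the component of D(r) \ C containing (−r,0)). Let (u_n) be a sequence of solutions of (CMC) on D⁻ converging to a solution u of (CMC) on D⁻ (u_n → u and ∇u_n → ∇u uniformly on every compact subset of D⁻). Suppose that at least one of the following holds: (1a) for every n, u_n tends to −∞ at every point of C (for all P ∈ C, M ∈ ℝ there is δ > 0 with u_n < −M on D⁻ ∩ B(P,δ)); or (1b) for every n, u_n is the restriction to D⁻ of a solution v_n of (CMC) on D(r), and C is a divergence line of (v_n). Then u tends to −∞ at every point of C: for every P ∈ C and M ∈ ℝ there is δ > 0 with u < −M on D⁻ ∩ B(P,δ). -/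

import Mathlib

/-!
The limit `v` is bounded above, near a point of the arc `C`, by explicit barriers that go to `-∞`
on `C`.

Put `R = 1 / (2H)` and use polar coordinates `(s, θ)` centred at `z₀ = (R, 0)`, so that `C` lies on
`s = R` and `D⁻` on `s > R`. For `0 < η ≤ l / 2` consider on the sector `R ≤ s ≤ R + l / 2`,
`|θ - c| < 2πl / R` the function

  `l log (s - R + η) - 4 l log cos (R (θ - c) / (4 l))`.

Its graph has mean curvature strictly smaller than `H` when `2 l ≤ R` (`barC_pos`), and it is `+∞`
on the two lateral sides. Choose `K`, independent of `η`, such that `u_n ≤ barrier + K` on the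
outer arc for all large `n`.

For a solution `u` on the sector, let `T` be a smooth nondecreasing cutoff of the excess
`u - barrier - K`, supported where the excess is positive, and integrate over the sector the
divergence of `T (X_u - X_barrier)`, where `X = ∇ / W`. As `p ↦ p / √(1 + |p|²)` is monotone
(`normal_monotone`), this divergence is at least `T` times the positive curvature defect of the
barrier (`fluxDiv_ge`). The flux vanishes on the outer arc and on the lateral sides, and on the
inner arc it is at most the integral of `1 - X_u · e_s` over the part of the arc where the excess
is positive. This is `flux_ineq`.

When each `u_n` tends to `-∞` on `C`, an inner arc close enough to `C` carries no positive excess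
(`flux_small_of_boundary`). When `C` is a divergence line, the inner arc is taken to be `C` itself
and `∫_C (1 - X · e_s) → 0` along the subsequence by dominated convergence, because the normals
converge to the horizontal vector `-e_s` (`flux_small_of_divergence`). In both cases the limit
satisfies `v ≤ barrier + K` for every `η` (`limit_le_barrier`); taking `η = s - R` gives
`v ≤ l log (2 (s - R)) - 4 l log cos (R (θ - c) / (4 l)) + K`, which tends to `-∞` as `s → R`.
-/

open Real MeasureTheory Filter Set

noncomputable section

/-- Euclidean norm on `ℝ × ℝ`. -/
def enorm2 (p : ℝ × ℝ) : ℝ := Real.sqrt (p.1 ^ 2 + p.2 ^ 2)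

/-- Partial derivative in the `x` direction. -/
def pdx (u : ℝ × ℝ → ℝ) (p : ℝ × ℝ) : ℝ := fderiv ℝ u p (1, 0)

/-- Partial derivative in the `y` direction. -/
def pdy (u : ℝ × ℝ → ℝ) (p : ℝ × ℝ) : ℝ := fderiv ℝ u p (0, 1)

/-- The area element `W_u = √(1 + |∇u|²)`. -/
def Wgraph (u : ℝ × ℝ → ℝ) (p : ℝ × ℝ) : ℝ :=
  Real.sqrt (1 + (pdx u p) ^ 2 + (pdy u p) ^ 2)

/-- Upward unit normal of the graph of `u`. -/
def normalVec (u : ℝ × ℝ → ℝ) (p : ℝ × ℝ) : ℝ × ℝ × ℝ :=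
  (-pdx u p / Wgraph u p, -pdy u p / Wgraph u p, 1 / Wgraph u p)

/-- `u` is a (C²) solution of the constant mean curvature `H` equation on `Ω`. -/
def IsCMCSolution (H : ℝ) (Ω : Set (ℝ × ℝ)) (u : ℝ × ℝ → ℝ) : Prop :=
  ContDiffOn ℝ 2 u Ω ∧ ∀ p ∈ Ω,
    (1 + (pdy u p) ^ 2) * pdx (fun q => pdx u q) p
      - 2 * (pdx u p) * (pdy u p) * pdy (fun q => pdx u q) p
      + (1 + (pdx u p) ^ 2) * pdy (fun q => pdy u q) p
    = 2 * H * (1 + (pdx u p) ^ 2 + (pdy u p) ^ 2) ^ ((3 : ℝ) / 2)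

/-- `C` is a divergence line of the sequence `u` on `Ω`. -/
def IsDivergenceLine (H : ℝ) (Ω : Set (ℝ × ℝ)) (u : ℕ → ℝ × ℝ → ℝ)
    (C : Set (ℝ × ℝ)) : Prop :=
  ∃ z₁ : ℝ × ℝ, C ⊆ Ω ∧ (∀ q ∈ C, enorm2 (q - z₁) = 1 / (2 * H)) ∧
    IsConnected C ∧ C.Nontrivial ∧
    ∃ φ : ℕ → ℕ, StrictMono φ ∧ ∀ Q ∈ C,
      Tendsto (fun n => normalVec (u (φ n)) Q) atTop
        (nhds (2 * H * (z₁.1 - Q.1), 2 * H * (z₁.2 - Q.2), 0))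

/-! ### The unit field of a solution -/

/-- Monotonicity of `p ↦ p / √(1 + |p|²)` on `ℝ²`. -/
theorem normal_monotone (a₁ a₂ b₁ b₂ : ℝ) :
    0 ≤ (a₁ - b₁) * (a₁ / √(1 + a₁ ^ 2 + a₂ ^ 2) - b₁ / √(1 + b₁ ^ 2 + b₂ ^ 2))
      + (a₂ - b₂) * (a₂ / √(1 + a₁ ^ 2 + a₂ ^ 2) - b₂ / √(1 + b₁ ^ 2 + b₂ ^ 2)) := by
  have ha : 0 < 1 + a₁ ^ 2 + a₂ ^ 2 := by positivity
  have hb : 0 < 1 + b₁ ^ 2 + b₂ ^ 2 := by positivity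
  set V := √(1 + a₁ ^ 2 + a₂ ^ 2) with hV
  set W := √(1 + b₁ ^ 2 + b₂ ^ 2) with hW
  have hV2 : V ^ 2 = 1 + a₁ ^ 2 + a₂ ^ 2 := Real.sq_sqrt ha.le
  have hW2 : W ^ 2 = 1 + b₁ ^ 2 + b₂ ^ 2 := Real.sq_sqrt hb.le
  have hVp : 0 < V := Real.sqrt_pos.2 ha
  have hWp : 0 < W := Real.sqrt_pos.2 hb
  have key : 1 + a₁ * b₁ + a₂ * b₂ ≤ V * W := by
    refine le_of_abs_le (abs_le_of_sq_le_sq ?_ (by positivity))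
    rw [mul_pow, hV2, hW2]
    nlinarith [sq_nonneg (a₁ - b₁), sq_nonneg (a₂ - b₂), sq_nonneg (a₁ * b₂ - a₂ * b₁)]
  have e : (a₁ - b₁) * (a₁ / V - b₁ / W) + (a₂ - b₂) * (a₂ / V - b₂ / W)
      = (V + W) * (V * W - (1 + a₁ * b₁ + a₂ * b₂)) / (V * W) := by
    field_simp
    linear_combination (-W) * hV2 - V * hW2
  rw [e]
  exact div_nonneg (mul_nonneg (by positivity) (by linarith)) (by positivity)

theorem fderiv_apply_pd (u : ℝ × ℝ → ℝ) (p w : ℝ × ℝ) :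
    fderiv ℝ u p w = w.1 * pdx u p + w.2 * pdy u p := by
  have : w = w.1 • ((1 : ℝ), (0 : ℝ)) + w.2 • ((0 : ℝ), (1 : ℝ)) := by ext <;> simp
  conv_lhs => rw [this, map_add, map_smul, map_smul]
  rfl

/-- Derivative along a line of the first component of `p / √(1 + |p|²)`, for `p = (a, b)`. -/
theorem hasDerivAt_unitField {a b : ℝ → ℝ} {a' b' t : ℝ} (ha : HasDerivAt a a' t)
    (hb : HasDerivAt b b' t) :
    HasDerivAt (fun τ => a τ / √(1 + a τ ^ 2 + b τ ^ 2))
      (((1 + b t ^ 2) * a' - a t * b t * b') / √(1 + a t ^ 2 + b t ^ 2) ^ 3) t := by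
  have hp : 0 < 1 + a t ^ 2 + b t ^ 2 := by positivity
  have hW := (((ha.pow 2).const_add 1).add (hb.pow 2)).sqrt hp.ne'
  have hWp : 0 < √(1 + a t ^ 2 + b t ^ 2) := Real.sqrt_pos.2 hp
  have h := ha.div hW hWp.ne'
  refine HasDerivAt.congr_deriv h ?_
  have hW2 : √(1 + a t ^ 2 + b t ^ 2) ^ 2 = 1 + a t ^ 2 + b t ^ 2 := Real.sq_sqrt hp.le
  change (a' * √(1 + a t ^ 2 + b t ^ 2) - a t * (((2 : ℕ) * a t ^ (2 - 1) * a'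
    + (2 : ℕ) * b t ^ (2 - 1) * b') / (2 * √(1 + a t ^ 2 + b t ^ 2))))
      / √(1 + a t ^ 2 + b t ^ 2) ^ 2 = _
  set W := √(1 + a t ^ 2 + b t ^ 2)
  field_simp
  push_cast
  simp only [pow_one]
  linear_combination (2 * a') * hW2

theorem Wgraph_pos (u : ℝ × ℝ → ℝ) (p : ℝ × ℝ) : 0 < Wgraph u p :=
  Real.sqrt_pos.2 (by positivity)

theorem cmc_differentiable {H : ℝ} {Ω : Set (ℝ × ℝ)} (hΩ : IsOpen Ω) {u : ℝ × ℝ → ℝ}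
    (hu : IsCMCSolution H Ω u) {p : ℝ × ℝ} (hp : p ∈ Ω) :
    DifferentiableAt ℝ u p ∧ DifferentiableAt ℝ (pdx u) p ∧ DifferentiableAt ℝ (pdy u) p := by
  have hc : ContDiffAt ℝ 2 u p := hu.1.contDiffAt (hΩ.mem_nhds hp)
  have h1 : DifferentiableAt ℝ (fderiv ℝ u) p :=
    (hc.fderiv_right (m := 1) (by norm_num)).differentiableAt (by norm_num)
  refine ⟨hc.differentiableAt (by norm_num), ?_, ?_⟩
  · exact h1.clm_apply (differentiableAt_const _)
  · exact h1.clm_apply (differentiableAt_const _)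

theorem cmc_symm {H : ℝ} {Ω : Set (ℝ × ℝ)} (hΩ : IsOpen Ω) {u : ℝ × ℝ → ℝ}
    (hu : IsCMCSolution H Ω u) {p : ℝ × ℝ} (hp : p ∈ Ω) :
    pdy (pdx u) p = pdx (pdy u) p := by
  have hc : ContDiffAt ℝ 2 u p := hu.1.contDiffAt (hΩ.mem_nhds hp)
  have h1 : DifferentiableAt ℝ (fderiv ℝ u) p :=
    (hc.fderiv_right (m := 1) (by norm_num)).differentiableAt (by norm_num)
  have hs := (hc.isSymmSndFDerivAt (by simp)) (0, 1) (1, 0)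
  have e : ∀ w z : ℝ × ℝ, fderiv ℝ (fun q => fderiv ℝ u q w) p z
      = fderiv ℝ (fderiv ℝ u) p z w := by
    intro w z
    rw [fderiv_clm_apply h1 (differentiableAt_const _)]
    simp
  unfold pdx pdy
  rw [e, e, hs]

/-- Divergence form of the equation: the field `∇u / W` is differentiable with divergence `2H`. -/
theorem cmc_unitField {H : ℝ} {Ω : Set (ℝ × ℝ)} (hΩ : IsOpen Ω) {u : ℝ × ℝ → ℝ}
    (hu : IsCMCSolution H Ω u) {p : ℝ × ℝ} (hp : p ∈ Ω) :
    DifferentiableAt ℝ (fun q => pdx u q / Wgraph u q) p ∧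
    DifferentiableAt ℝ (fun q => pdy u q / Wgraph u q) p ∧
    pdx (fun q => pdx u q / Wgraph u q) p + pdy (fun q => pdy u q / Wgraph u q) p = 2 * H := by
  obtain ⟨-, hx, hy⟩ := cmc_differentiable hΩ hu hp
  have hq : 0 < 1 + pdx u p ^ 2 + pdy u p ^ 2 := by positivity
  have hW : DifferentiableAt ℝ (Wgraph u) p := by
    unfold Wgraph
    exact (((differentiableAt_const _).add (hx.pow 2)).add (hy.pow 2)).sqrt hq.ne'
  have hA : DifferentiableAt ℝ (fun q => pdx u q / Wgraph u q) p := by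
    have := (Wgraph_pos u p).ne'
    simpa only [div_eq_mul_inv] using hx.fun_mul (hW.fun_inv this)
  have hB : DifferentiableAt ℝ (fun q => pdy u q / Wgraph u q) p := by
    have := (Wgraph_pos u p).ne'
    simpa only [div_eq_mul_inv] using hy.fun_mul (hW.fun_inv this)
  refine ⟨hA, hB, ?_⟩
  have line : ∀ w : ℝ × ℝ, HasDerivAt (fun t : ℝ => p + t • w) w 0 := by
    intro w
    simpa using ((hasDerivAt_id (0 : ℝ)).smul_const w).const_add p
  have dir : ∀ (h : ℝ × ℝ → ℝ) (w : ℝ × ℝ), DifferentiableAt ℝ h p →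
      HasDerivAt (fun t : ℝ => h (p + t • w)) (fderiv ℝ h p w) 0 := by
    intro h w hd
    have : HasFDerivAt h (fderiv ℝ h p) (p + (0 : ℝ) • w) := by simpa using hd.hasFDerivAt
    exact this.comp_hasDerivAt 0 (line w)
  have e1 : pdx (fun q => pdx u q / Wgraph u q) p
      = ((1 + pdy u p ^ 2) * pdx (pdx u) p - pdx u p * pdy u p * pdx (pdy u) p)
        / Wgraph u p ^ 3 := by
    have h := hasDerivAt_unitField (dir _ (1, 0) hx) (dir _ (1, 0) hy)
    have h' := (dir _ (1, 0) hA).unique h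
    simpa [pdx, pdy, Wgraph] using h'
  have e2 : pdy (fun q => pdy u q / Wgraph u q) p
      = ((1 + pdx u p ^ 2) * pdy (pdy u) p - pdy u p * pdx u p * pdy (pdx u) p)
        / Wgraph u p ^ 3 := by
    have h := hasDerivAt_unitField (dir _ (0, 1) hy) (dir _ (0, 1) hx)
    have hB' := dir _ (0, 1) hB
    have : (fun t : ℝ => pdy u (p + t • (0, 1)) / Wgraph u (p + t • (0, 1)))
        = fun t : ℝ => pdy u (p + t • (0, 1))
          / √(1 + pdy u (p + t • (0, 1)) ^ 2 + pdx u (p + t • (0, 1)) ^ 2) := by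
      funext t; unfold Wgraph; rw [add_right_comm]
    have h' := hB'.unique (this ▸ h)
    simp only [zero_smul, add_zero] at h'
    rw [add_right_comm] at h'
    exact h'
  have pde := hu.2 p hp
  have hpow : (1 + pdx u p ^ 2 + pdy u p ^ 2) ^ ((3 : ℝ) / 2) = Wgraph u p ^ 3 := by
    unfold Wgraph
    rw [Real.sqrt_eq_rpow, ← Real.rpow_mul_natCast hq.le]
    norm_num
  rw [hpow] at pde
  rw [e1, e2, ← add_div, div_eq_iff (pow_pos (Wgraph_pos u p) 3).ne']
  have hs := cmc_symm hΩ hu hp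
  change (1 + pdy u p ^ 2) * pdx (pdx u) p - 2 * pdx u p * pdy u p * pdy (pdx u) p
    + (1 + pdx u p ^ 2) * pdy (pdy u) p = _ at pde
  rw [← hs]
  linear_combination pde

/-! ### The barrier and its curvature defect -/

/-- The barrier in polar coordinates `x = (s, θ)`; it is meaningful where `0 < s - R + η` and
`|θ - c| < 2πl / R`. -/
def barrier (R l η c : ℝ) (x : ℝ × ℝ) : ℝ :=
  l * Real.log (x.1 - R + η) - 4 * l * Real.log (Real.cos (R / (4 * l) * (x.2 - c)))

/-- The radial component `∂_s` of the gradient of `barrier`. -/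
def barP (R l η : ℝ) (x : ℝ × ℝ) : ℝ := l / (x.1 - R + η)

/-- The angular component `s⁻¹ ∂_θ` of the gradient of `barrier`. -/
def barQ (R l c : ℝ) (x : ℝ × ℝ) : ℝ := R * Real.tan (R / (4 * l) * (x.2 - c)) / x.1

/-- The area element `√(1 + |∇ barrier|²)`. -/
def barW (R l η c : ℝ) (x : ℝ × ℝ) : ℝ := √(1 + barP R l η x ^ 2 + barQ R l c x ^ 2)

/-- The curvature defect of the barrier, `s (1 / R - div (∇ barrier / W))`, expanded explicitly;
the factor `s` is the polar area density (see `barField_div`). -/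
def barC (R l η c : ℝ) (x : ℝ × ℝ) : ℝ :=
  x.1 / R - (barP R l η x * (1 + barP R l η x ^ 2 + 2 * barQ R l c x ^ 2)
    - x.1 * (barP R l η x ^ 2 / l) * (1 + barQ R l c x ^ 2)
    + R * (R / (4 * l)) * (1 + Real.tan (R / (4 * l) * (x.2 - c)) ^ 2) / x.1
      * (1 + barP R l η x ^ 2)) / barW R l η c x ^ 3

theorem barW_pos (R l η c : ℝ) (x : ℝ × ℝ) : 0 < barW R l η c x :=
  Real.sqrt_pos.2 (by positivity)

/-- The barrier is a strict supersolution. -/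
theorem barC_pos {R l η c : ℝ} {x : ℝ × ℝ} (hl : 0 < l) (hlR : 2 * l ≤ R) (hs : R ≤ x.1)
    (h0 : 0 < x.1 - R + η) (h1 : x.1 - R + η ≤ l) : 0 < barC R l η c x := by
  have hR : 0 < R := by linarith
  have hs0 : 0 < x.1 := by linarith
  have hp1 : 1 ≤ barP R l η x := by
    unfold barP; rw [le_div_iff₀ h0]; linarith
  have hq : R ^ 2 * Real.tan (R / (4 * l) * (x.2 - c)) ^ 2 = barQ R l c x ^ 2 * x.1 ^ 2 := by
    unfold barQ; field_simp
  have hW := barW_pos R l η c x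
  have hW2 : barW R l η c x ^ 2 = 1 + barP R l η x ^ 2 + barQ R l c x ^ 2 :=
    Real.sq_sqrt (by positivity)
  unfold barC
  -- With `p ≥ 1` and `s ≥ R ≥ 2 l`, the radial term `s p² (1 + q²) / l` dominates the angular one
  -- with a surplus of at least `(1 + p²)(1 + q²) / 2`, which absorbs `p q²`.
  set p := barP R l η x
  set q := barQ R l c x
  set W := barW R l η c x
  set s := x.1
  set t := Real.tan (R / (4 * l) * (x.2 - c))
  have hpW : p ≤ W := by
    refine le_of_abs_le (abs_le_of_sq_le_sq ?_ hW.le)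
    nlinarith [sq_nonneg q]
  have e1 : R * (R / (4 * l)) * (1 + t ^ 2) / s ≤ s / (4 * l) * (1 + q ^ 2) := by
    rw [div_le_iff₀ hs0]
    have e : R * (R / (4 * l)) * (1 + t ^ 2) = (R ^ 2 + q ^ 2 * s ^ 2) / (4 * l) := by
      rw [← hq]; field_simp
    have e' : s / (4 * l) * (1 + q ^ 2) * s = (s ^ 2 + q ^ 2 * s ^ 2) / (4 * l) := by
      field_simp
    rw [e, e']
    gcongr
  have e2 : s / (2 * l) * (1 + p ^ 2) ≤ s * (p ^ 2 / l) := by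
    have : s * (p ^ 2 / l) = s / (2 * l) * (2 * p ^ 2) := by field_simp
    rw [this]
    gcongr
    nlinarith
  have e3 : (1 : ℝ) / 2 ≤ s / (4 * l) := by
    rw [le_div_iff₀ (by positivity)]; linarith
  rw [sub_pos, div_lt_iff₀ (by positivity)]
  have h1 : W ^ 3 ≤ s / R * W ^ 3 := by
    have : 1 ≤ s / R := by rw [le_div_iff₀ hR]; linarith
    have h3 : 0 < W ^ 3 := by positivity
    nlinarith
  refine lt_of_lt_of_le ?_ h1
  have hA : 0 ≤ 1 + p ^ 2 := by positivity
  have hB : 0 ≤ 1 + q ^ 2 := by positivity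
  have f1 := mul_le_mul_of_nonneg_right e1 hA
  have f2 := mul_le_mul_of_nonneg_right e2 hB
  have f3 := mul_le_mul_of_nonneg_right e3 (mul_nonneg hA hB)
  have f4 : s / (2 * l) = 2 * (s / (4 * l)) := by field_simp; norm_num
  rw [f4] at f2
  have f5 : p * (1 + p ^ 2 + 2 * q ^ 2) ≤ W ^ 3 + p * q ^ 2 := by
    have : W ^ 3 = W * (1 + p ^ 2 + q ^ 2) := by rw [← hW2]; ring
    rw [this]
    have := mul_le_mul_of_nonneg_right hpW (by positivity : 0 ≤ 1 + p ^ 2 + q ^ 2)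
    linarith
  have f6 : p * q ^ 2 < 1 / 2 * ((1 + p ^ 2) * (1 + q ^ 2)) := by
    nlinarith [mul_nonneg (sq_nonneg (p - 1)) (sq_nonneg q), sq_nonneg p]
  linarith

theorem barrier_hasDerivAt_fst {R l η c : ℝ} {x : ℝ × ℝ} (h0 : 0 < x.1 - R + η) :
    HasDerivAt (fun s => barrier R l η c (s, x.2)) (barP R l η x) x.1 := by
  unfold barrier barP
  have h := ((((hasDerivAt_id x.1).sub_const R).add_const η).log h0.ne').const_mul l
  refine HasDerivAt.congr_deriv
    (h.sub_const (4 * l * Real.log (Real.cos (R / (4 * l) * (x.2 - c))))) ?_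
  simp [div_eq_mul_inv]

theorem barrier_hasDerivAt_snd {R l η c : ℝ} {x : ℝ × ℝ} (hl : 0 < l) (hs : 0 < x.1)
    (hc : 0 < Real.cos (R / (4 * l) * (x.2 - c))) :
    HasDerivAt (fun θ => barrier R l η c (x.1, θ)) (x.1 * barQ R l c x) x.2 := by
  unfold barrier barQ
  have h := (((((hasDerivAt_id x.2).sub_const c).const_mul (R / (4 * l))).cos).log
    hc.ne').const_mul (4 * l)
  refine HasDerivAt.congr_deriv (h.const_sub (l * Real.log (x.1 - R + η))) ?_
  rw [Real.tan_eq_sin_div_cos]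
  simp only [id]
  field_simp

theorem barP_hasDerivAt_fst {R l η : ℝ} {x : ℝ × ℝ} (h0 : 0 < x.1 - R + η) :
    HasDerivAt (fun s => barP R l η (s, x.2)) (-(barP R l η x ^ 2 / l)) x.1 := by
  unfold barP
  have h := (hasDerivAt_const x.1 l).div (((hasDerivAt_id x.1).sub_const R).add_const η) h0.ne'
  refine HasDerivAt.congr_deriv h ?_
  simp only [id]
  field_simp
  ring

theorem barQ_hasDerivAt_fst {R l c : ℝ} {x : ℝ × ℝ} (hs : 0 < x.1) :
    HasDerivAt (fun s => barQ R l c (s, x.2)) (-(barQ R l c x / x.1)) x.1 := by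
  unfold barQ
  have h := (hasDerivAt_const x.1 (R * Real.tan (R / (4 * l) * (x.2 - c)))).div
    (hasDerivAt_id x.1) hs.ne'
  refine HasDerivAt.congr_deriv h ?_
  simp only [id]
  field_simp
  ring

theorem barQ_hasDerivAt_snd {R l c : ℝ} {x : ℝ × ℝ}
    (hc : 0 < Real.cos (R / (4 * l) * (x.2 - c))) :
    HasDerivAt (fun θ => barQ R l c (x.1, θ))
      (R * (R / (4 * l)) * (1 + Real.tan (R / (4 * l) * (x.2 - c)) ^ 2) / x.1) x.2 := by
  unfold barQ
  have h1 := ((hasDerivAt_id x.2).sub_const c).const_mul (R / (4 * l))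
  have h := (((Real.hasDerivAt_tan hc.ne').comp x.2 h1).const_mul R).div_const x.1
  refine HasDerivAt.congr_deriv h ?_
  rw [← Real.inv_one_add_tan_sq hc.ne']
  field_simp

theorem barField_div {R l η c : ℝ} {x : ℝ × ℝ} (hl : 0 < l) (hs : 0 < x.1)
    (h0 : 0 < x.1 - R + η) (hc : 0 < Real.cos (R / (4 * l) * (x.2 - c))) :
    ∃ d₁ d₂ : ℝ,
      HasDerivAt (fun s => s * (barP R l η (s, x.2) / barW R l η c (s, x.2))) d₁ x.1 ∧
      HasDerivAt (fun θ => barQ R l c (x.1, θ) / barW R l η c (x.1, θ)) d₂ x.2 ∧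
      d₁ + d₂ = x.1 / R - barC R l η c x := by
  have h1 := (hasDerivAt_id x.1).mul
    (hasDerivAt_unitField (barP_hasDerivAt_fst (l := l) h0)
      (barQ_hasDerivAt_fst (R := R) (l := l) (c := c) hs))
  have hP2 : HasDerivAt (fun θ => barP R l η (x.1, θ)) 0 x.2 :=
    hasDerivAt_const x.2 (barP R l η x)
  have h2 := hasDerivAt_unitField (barQ_hasDerivAt_snd hc) hP2
  have hWc : (fun θ => barQ R l c (x.1, θ) / barW R l η c (x.1, θ)) = fun θ =>
      barQ R l c (x.1, θ) / √(1 + barQ R l c (x.1, θ) ^ 2 + barP R l η (x.1, θ) ^ 2) := by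
    funext θ
    unfold barW
    rw [add_right_comm]
  rw [hWc]
  refine ⟨_, _, h1, h2, ?_⟩
  · have hW := barW_pos R l η c x
    have hW2 : barW R l η c x ^ 2 = 1 + barP R l η x ^ 2 + barQ R l c x ^ 2 :=
      Real.sq_sqrt (by positivity)
    have hWe : √(1 + barQ R l c x ^ 2 + barP R l η x ^ 2) = barW R l η c x := by
      unfold barW; rw [add_right_comm]
    change 1 * (barP R l η x / barW R l η c x) + x.1 * (((1 + barQ R l c x ^ 2) * -(barP R l η x ^ 2 / l)
      - barP R l η x * barQ R l c x * -(barQ R l c x / x.1)) / barW R l η c x ^ 3)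
      + ((1 + barP R l η x ^ 2) * _ - barQ R l c x * barP R l η x * 0)
        / √(1 + barQ R l c x ^ 2 + barP R l η x ^ 2) ^ 3 = _
    rw [hWe]
    unfold barC
    generalize R * (R / (4 * l)) * (1 + Real.tan (R / (4 * l) * (x.2 - c)) ^ 2) / x.1 = g
    generalize barP R l η x = p at *
    generalize barQ R l c x = q at *
    generalize barW R l η c x = W at *
    generalize x.1 / R = z
    field_simp
    linear_combination (l * p) * hW2

/-! ### Polar coordinates and the truncated flux -/

/-- Polar coordinates `(s, θ)` around the point `(R, 0)`. -/
def polar (R : ℝ) (x : ℝ × ℝ) : ℝ × ℝ := (R + x.1 * Real.cos x.2, x.1 * Real.sin x.2)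

/-- The radial component `∂_s u` of the gradient of `u`, in polar coordinates. -/
def radG (R : ℝ) (u : ℝ × ℝ → ℝ) (x : ℝ × ℝ) : ℝ :=
  pdx u (polar R x) * Real.cos x.2 + pdy u (polar R x) * Real.sin x.2

/-- The angular component `s⁻¹ ∂_θ u` of the gradient of `u`, in polar coordinates. -/
def angG (R : ℝ) (u : ℝ × ℝ → ℝ) (x : ℝ × ℝ) : ℝ :=
  -pdx u (polar R x) * Real.sin x.2 + pdy u (polar R x) * Real.cos x.2

theorem polar_differentiable (R : ℝ) : Differentiable ℝ (polar R) := by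
  unfold polar
  fun_prop

theorem polar_continuous (R : ℝ) : Continuous (polar R) := (polar_differentiable R).continuous

theorem polar_hasDerivAt_fst (R : ℝ) (x : ℝ × ℝ) :
    HasDerivAt (fun s => polar R (s, x.2)) (Real.cos x.2, Real.sin x.2) x.1 := by
  unfold polar
  refine HasDerivAt.prodMk ?_ ?_
  · simpa using ((hasDerivAt_id x.1).mul_const (Real.cos x.2)).const_add R
  · simpa using (hasDerivAt_id x.1).mul_const (Real.sin x.2)

theorem polar_hasDerivAt_snd (R : ℝ) (x : ℝ × ℝ) :
    HasDerivAt (fun θ => polar R (x.1, θ)) (x.1 * -Real.sin x.2, x.1 * Real.cos x.2) x.2 := by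
  unfold polar
  refine HasDerivAt.prodMk ?_ ?_
  · exact ((Real.hasDerivAt_cos x.2).const_mul x.1).const_add R
  · exact (Real.hasDerivAt_sin x.2).const_mul x.1

theorem comp_polar_fst {R : ℝ} {h : ℝ × ℝ → ℝ} {x : ℝ × ℝ}
    (hd : DifferentiableAt ℝ h (polar R x)) :
    HasDerivAt (fun s => h (polar R (s, x.2)))
      (Real.cos x.2 * pdx h (polar R x) + Real.sin x.2 * pdy h (polar R x)) x.1 := by
  have := HasFDerivAt.comp_hasDerivAt (l := h) x.1 (f := fun s => polar R (s, x.2))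
    hd.hasFDerivAt (polar_hasDerivAt_fst R x)
  rw [fderiv_apply_pd] at this
  exact this

theorem comp_polar_snd {R : ℝ} {h : ℝ × ℝ → ℝ} {x : ℝ × ℝ}
    (hd : DifferentiableAt ℝ h (polar R x)) :
    HasDerivAt (fun θ => h (polar R (x.1, θ)))
      (x.1 * -Real.sin x.2 * pdx h (polar R x) + x.1 * Real.cos x.2 * pdy h (polar R x)) x.2 := by
  have := HasFDerivAt.comp_hasDerivAt (l := h) x.2 (f := fun θ => polar R (x.1, θ))
    hd.hasFDerivAt (polar_hasDerivAt_snd R x)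
  rw [fderiv_apply_pd] at this
  exact this

theorem Wgraph_polar (R : ℝ) (u : ℝ × ℝ → ℝ) (x : ℝ × ℝ) :
    Wgraph u (polar R x) = √(1 + radG R u x ^ 2 + angG R u x ^ 2) := by
  unfold Wgraph radG angG
  congr 1
  have := Real.sin_sq_add_cos_sq x.2
  linear_combination (-(pdx u (polar R x) ^ 2 + pdy u (polar R x) ^ 2)) * this

/-- The divergence form of the equation in polar coordinates. -/
theorem cmc_polar {R H : ℝ} {Ω : Set (ℝ × ℝ)} (hΩ : IsOpen Ω) {u : ℝ × ℝ → ℝ}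
    (hu : IsCMCSolution H Ω u) {x : ℝ × ℝ} (hx : polar R x ∈ Ω) :
    ∃ d₁ d₂ : ℝ,
      HasDerivAt (fun s => s * (radG R u (s, x.2) / Wgraph u (polar R (s, x.2)))) d₁ x.1 ∧
      HasDerivAt (fun θ => angG R u (x.1, θ) / Wgraph u (polar R (x.1, θ))) d₂ x.2 ∧
      d₁ + d₂ = 2 * H * x.1 := by
  obtain ⟨hA, hB, hdiv⟩ := cmc_unitField hΩ hu hx
  have h1 := (hasDerivAt_id x.1).mul (((comp_polar_fst hA).mul_const (Real.cos x.2)).add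
    ((comp_polar_fst hB).mul_const (Real.sin x.2)))
  have h2 := ((comp_polar_snd hB).mul (Real.hasDerivAt_cos x.2)).sub
    ((comp_polar_snd hA).mul (Real.hasDerivAt_sin x.2))
  have e1 : (fun s => s * (radG R u (s, x.2) / Wgraph u (polar R (s, x.2)))) = fun s =>
      s * (pdx u (polar R (s, x.2)) / Wgraph u (polar R (s, x.2)) * Real.cos x.2
        + pdy u (polar R (s, x.2)) / Wgraph u (polar R (s, x.2)) * Real.sin x.2) := by
    funext s; unfold radG; ring
  have e2 : (fun θ => angG R u (x.1, θ) / Wgraph u (polar R (x.1, θ))) = fun θ =>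
      pdy u (polar R (x.1, θ)) / Wgraph u (polar R (x.1, θ)) * Real.cos θ
        - pdx u (polar R (x.1, θ)) / Wgraph u (polar R (x.1, θ)) * Real.sin θ := by
    funext θ; unfold angG; ring
  rw [e1, e2]
  refine ⟨_, _, h1, h2, ?_⟩
  simp only [id, Pi.add_apply]
  have := Real.sin_sq_add_cos_sq x.2
  linear_combination x.1 * hdiv + x.1 * (pdx (fun q => pdx u q / Wgraph u q) (polar R x)
    + pdy (fun q => pdy u q / Wgraph u q) (polar R x)) * this

/-- The amount by which `u` exceeds `barrier + K`, in polar coordinates. -/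
def excess (R l η c K : ℝ) (u : ℝ × ℝ → ℝ) (x : ℝ × ℝ) : ℝ :=
  u (polar R x) - barrier R l η c x - K

/-- The radial component, times the polar density `s`, of the truncated field
`T(excess) (∇u / W_u - ∇ barrier / W)`, where `T` is the smooth transition function. -/
def fluxS (R l η c K : ℝ) (u : ℝ × ℝ → ℝ) (x : ℝ × ℝ) : ℝ :=
  Real.smoothTransition (excess R l η c K u x) *
    (x.1 * (radG R u x / Wgraph u (polar R x)) - x.1 * (barP R l η x / barW R l η c x))

/-- The angular component of the truncated field `T(excess) (∇u / W_u - ∇ barrier / W)`. -/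
def fluxT (R l η c K : ℝ) (u : ℝ × ℝ → ℝ) (x : ℝ × ℝ) : ℝ :=
  Real.smoothTransition (excess R l η c K u x) *
    (angG R u x / Wgraph u (polar R x) - barQ R l c x / barW R l η c x)

/-- The polar divergence `∂_s fluxS + ∂_θ fluxT` (see `flux_hasDerivAt`), expanded for a solution
`u`: the first term comes from the two equations, the second from differentiating the cutoff. -/
def fluxDiv (R l η c K : ℝ) (u : ℝ × ℝ → ℝ) (x : ℝ × ℝ) : ℝ :=
  Real.smoothTransition (excess R l η c K u x) * barC R l η c x
  + deriv Real.smoothTransition (excess R l η c K u x) * (x.1 *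
    ((radG R u x - barP R l η x) *
        (radG R u x / Wgraph u (polar R x) - barP R l η x / barW R l η c x)
      + (angG R u x - barQ R l c x) *
        (angG R u x / Wgraph u (polar R x) - barQ R l c x / barW R l η c x)))

theorem smoothTransition_hasDerivAt (t : ℝ) :
    HasDerivAt Real.smoothTransition (deriv Real.smoothTransition t) t :=
  ((Real.smoothTransition.contDiff (n := 1)).differentiable (by norm_num) t).hasDerivAt

theorem flux_hasDerivAt {R H l η c K : ℝ} (hRH : 2 * H = 1 / R) (hl : 0 < l)
    {Ω : Set (ℝ × ℝ)} (hΩ : IsOpen Ω) {u : ℝ × ℝ → ℝ}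
    (hu : IsCMCSolution H Ω u) {x : ℝ × ℝ} (hx : polar R x ∈ Ω) (hs : 0 < x.1)
    (h0 : 0 < x.1 - R + η) (hc : 0 < Real.cos (R / (4 * l) * (x.2 - c))) :
    ∃ d₁ d₂ : ℝ, HasDerivAt (fun s => fluxS R l η c K u (s, x.2)) d₁ x.1 ∧
      HasDerivAt (fun θ => fluxT R l η c K u (x.1, θ)) d₂ x.2 ∧
      d₁ + d₂ = fluxDiv R l η c K u x := by
  obtain ⟨a₁, a₂, ha₁, ha₂, ha⟩ := cmc_polar hΩ hu hx
  obtain ⟨b₁, b₂, hb₁, hb₂, hb⟩ := barField_div (R := R) (η := η) hl hs h0 hc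
  have hd := (cmc_differentiable hΩ hu hx).1
  have hS₁ : HasDerivAt (fun s => excess R l η c K u (s, x.2))
      (radG R u x - barP R l η x) x.1 := by
    refine (((comp_polar_fst hd).sub (barrier_hasDerivAt_fst h0)).sub_const K).congr_deriv ?_
    unfold radG; ring
  have hS₂ : HasDerivAt (fun θ => excess R l η c K u (x.1, θ))
      (x.1 * (angG R u x - barQ R l c x)) x.2 := by
    refine (((comp_polar_snd hd).sub (barrier_hasDerivAt_snd hl hs hc)).sub_const K).congr_deriv ?_
    unfold angG; ring
  have hT₁ := (smoothTransition_hasDerivAt (excess R l η c K u x)).comp x.1 hS₁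
  have hT₂ := (smoothTransition_hasDerivAt (excess R l η c K u x)).comp x.2 hS₂
  refine ⟨_, _, hT₁.mul (ha₁.sub hb₁), hT₂.mul (ha₂.sub hb₂), ?_⟩
  simp only [Function.comp]
  have e : a₁ - b₁ + (a₂ - b₂) = barC R l η c x := by
    have : 2 * H * x.1 = x.1 / R := by rw [hRH]; ring
    linarith
  unfold fluxDiv
  rw [← e]
  ring

theorem flux_differentiableAt {R H l η c K : ℝ}
    {Ω : Set (ℝ × ℝ)} (hΩ : IsOpen Ω) {u : ℝ × ℝ → ℝ}
    (hu : IsCMCSolution H Ω u) {x : ℝ × ℝ} (hx : polar R x ∈ Ω) (hs : 0 < x.1)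
    (h0 : 0 < x.1 - R + η) (hc : 0 < Real.cos (R / (4 * l) * (x.2 - c))) :
    DifferentiableAt ℝ (fluxS R l η c K u) x ∧ DifferentiableAt ℝ (fluxT R l η c K u) x ∧
      ContinuousAt (fluxDiv R l η c K u) x ∧ ContinuousAt (barC R l η c) x ∧
      ContinuousAt (excess R l η c K u) x ∧
      ContinuousAt (fun y => radG R u y / Wgraph u (polar R y)) x := by
  obtain ⟨hd, hdx, hdy⟩ := cmc_differentiable hΩ hu hx
  have hpol := polar_differentiable R x
  have k1 : DifferentiableAt ℝ (fun y => u (polar R y)) x := hd.comp x hpol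
  have k2 : DifferentiableAt ℝ (fun y => pdx u (polar R y)) x := hdx.comp x hpol
  have k3 : DifferentiableAt ℝ (fun y => pdy u (polar R y)) x := hdy.comp x hpol
  have kr : DifferentiableAt ℝ (radG R u) x := by unfold radG; fun_prop
  have ka : DifferentiableAt ℝ (angG R u) x := by unfold angG; fun_prop
  have kW : DifferentiableAt ℝ (fun y => Wgraph u (polar R y)) x := by
    unfold Wgraph
    have : 1 + pdx u (polar R x) ^ 2 + pdy u (polar R x) ^ 2 ≠ 0 := by positivity
    fun_prop (disch := assumption)
  have kW0 : Wgraph u (polar R x) ≠ 0 := (Wgraph_pos _ _).ne'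
  have h0' := h0.ne'
  have hc' := hc.ne'
  have hs' := hs.ne'
  have kT : DifferentiableAt ℝ (fun y : ℝ × ℝ => Real.tan (R / (4 * l) * (y.2 - c))) x := by
    have h1 : DifferentiableAt ℝ (fun y : ℝ × ℝ => R / (4 * l) * (y.2 - c)) x := by fun_prop
    exact DifferentiableAt.comp (g := Real.tan) x (Real.differentiableAt_tan.2 hc') h1
  have kB : DifferentiableAt ℝ (barrier R l η c) x := by
    unfold barrier; fun_prop (disch := assumption)
  have kP : DifferentiableAt ℝ (barP R l η) x := by
    unfold barP; fun_prop (disch := assumption)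
  have kQ : DifferentiableAt ℝ (barQ R l c) x := by
    unfold barQ; fun_prop (disch := assumption)
  have kBW : DifferentiableAt ℝ (barW R l η c) x := by
    unfold barW
    have : 1 + barP R l η x ^ 2 + barQ R l c x ^ 2 ≠ 0 := by positivity
    fun_prop (disch := assumption)
  have kBW0 : barW R l η c x ≠ 0 := (barW_pos _ _ _ _ _).ne'
  have kE : DifferentiableAt ℝ (excess R l η c K u) x := by
    unfold excess; fun_prop
  have kst : DifferentiableAt ℝ (fun y => Real.smoothTransition (excess R l η c K u y)) x :=
    (smoothTransition_hasDerivAt _).differentiableAt.comp x kE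
  have kdst : ContinuousAt (fun y => deriv Real.smoothTransition (excess R l η c K u y)) x :=
    ((Real.smoothTransition.contDiff (n := 1)).continuous_deriv
      (by norm_num)).continuousAt.comp kE.continuousAt
  have kC : ContinuousAt (barC R l η c) x := by
    unfold barC
    have h3 : barW R l η c x ^ 3 ≠ 0 := pow_ne_zero _ kBW0
    have := kT.continuousAt
    have := kP.continuousAt
    have := kQ.continuousAt
    have := kBW.continuousAt
    fun_prop (disch := assumption)
  refine ⟨?_, ?_, ?_, kC, kE.continuousAt, ?_⟩
  · unfold fluxS; fun_prop (disch := assumption)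
  · unfold fluxT; fun_prop (disch := assumption)
  · unfold fluxDiv
    have := kP.continuousAt
    have := kQ.continuousAt
    have := kBW.continuousAt
    have := kW.continuousAt
    have := kr.continuousAt
    have := ka.continuousAt
    have := kst.continuousAt
    fun_prop (disch := assumption)
  · have := kW.continuousAt
    have := kr.continuousAt
    fun_prop (disch := assumption)

/-- The cutoff term of `fluxDiv` is nonnegative by monotonicity of the unit field. -/
theorem fluxDiv_ge {R l η c K : ℝ} {u : ℝ × ℝ → ℝ} {x : ℝ × ℝ} (hs : 0 ≤ x.1) :
    Real.smoothTransition (excess R l η c K u x) * barC R l η c x ≤ fluxDiv R l η c K u x := by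
  have h1 := normal_monotone (radG R u x) (angG R u x) (barP R l η x) (barQ R l c x)
  rw [← Wgraph_polar] at h1
  have h2 : 0 ≤ deriv Real.smoothTransition (excess R l η c K u x) :=
    Real.smoothTransition.monotone.deriv_nonneg
  unfold fluxDiv
  have := mul_nonneg h2 (mul_nonneg hs h1)
  unfold barW
  linarith

/-! ### The flux inequality on a sector -/

theorem cos_pos_sector {R l c β θ : ℝ} (hl : 0 < l) (hR : 0 < R) (hβ : β < 2 * π * l / R)
    (hθ : θ ∈ Icc (c - β) (c + β)) : 0 < Real.cos (R / (4 * l) * (θ - c)) := by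
  have hk : 0 < R / (4 * l) := by positivity
  have hω : R / (4 * l) * (2 * π * l / R) = π / 2 := by field_simp; norm_num
  have h1 := mul_lt_mul_of_pos_left hβ hk
  have h2 := mul_le_mul_of_nonneg_left (sub_le_iff_le_add'.2 hθ.2) hk.le
  have h3 := mul_le_mul_of_nonneg_left (by linarith [hθ.1] : -β ≤ θ - c) hk.le
  apply Real.cos_pos_of_mem_Ioo
  constructor <;> linarith

/-- The barrier exceeds any given height on suitable rays close to the lateral sides. -/
theorem exists_side {R l β₀ N : ℝ} (hl : 0 < l) (hR : 0 < R) (hβ₀ : 0 ≤ β₀)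
    (hβ : β₀ < 2 * π * l / R) :
    ∃ β, β₀ ≤ β ∧ β < 2 * π * l / R ∧ N ≤ -Real.log (Real.cos (R / (4 * l) * β)) := by
  have hk : 0 < R / (4 * l) := by positivity
  have hω : R / (4 * l) * (2 * π * l / R) = π / 2 := by field_simp; norm_num
  set k := R / (4 * l)
  set ω := 2 * π * l / R
  set ε := min (Real.exp (-N)) (k * (ω - β₀)) with hε
  have hε0 : 0 < ε := lt_min (Real.exp_pos _) (mul_pos hk (by linarith))
  have hε1 : ε ≤ k * (ω - β₀) := min_le_right _ _
  have hε2 : ε ≤ π / 2 := by nlinarith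
  refine ⟨ω - ε / k, ?_, ?_, ?_⟩
  · have : ε / k ≤ ω - β₀ := by rw [div_le_iff₀ hk]; linarith
    linarith
  · have : 0 < ε / k := by positivity
    linarith
  · have e : k * (ω - ε / k) = π / 2 - ε := by
      rw [mul_sub, hω]; field_simp
    rw [e, Real.cos_pi_div_two_sub]
    have hsin : 0 < Real.sin ε := Real.sin_pos_of_pos_of_lt_pi hε0 (by linarith [Real.pi_pos])
    have : Real.log (Real.sin ε) ≤ Real.log (Real.exp (-N)) :=
      Real.log_le_log hsin ((Real.sin_le hε0.le).trans (min_le_left _ _))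
    rw [Real.log_exp] at this
    linarith

set_option maxHeartbeats 400000 in
/-- The flux inequality. The function `e` dominates `1 - X_u · e_s` wherever `u` exceeds the minimum
of `barrier + K` on the inner arc `s = s₀`; then the integral of `e`, times `s₀`, bounds the
integral of the cutoff times the curvature defect over any rectangle `[a, b] × [c₁, d₁]` of the
sector. The divergence theorem is applied on a slightly narrower sector `|θ - c| ≤ β`, on whose
lateral sides the barrier is so high that the excess is nonpositive. -/
theorem flux_ineq {R H l η c K : ℝ} (hRH : 2 * H = 1 / R) (hl : 0 < l) (hlR : 2 * l ≤ R)
    {Ω : Set (ℝ × ℝ)} (hΩ : IsOpen Ω) {u : ℝ × ℝ → ℝ} (hu : IsCMCSolution H Ω u)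
    {s₀ s₁ : ℝ} (hRs : R ≤ s₀) (hs01 : s₀ < s₁) (hη0 : 0 < s₀ - R + η) (hη1 : s₁ - R + η ≤ l)
    (hbox : ∀ x : ℝ × ℝ, x.1 ∈ Icc s₀ s₁ →
      x.2 ∈ Icc (c - 2 * π * l / R) (c + 2 * π * l / R) → polar R x ∈ Ω)
    (hout : ∀ θ ∈ Icc (c - 2 * π * l / R) (c + 2 * π * l / R),
      u (polar R (s₁, θ)) ≤ l * Real.log (s₁ - R + η) + K)
    {e : ℝ → ℝ} (he : IntervalIntegrable e volume (c - 2 * π * l / R) (c + 2 * π * l / R))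
    (he0 : ∀ θ ∈ Icc (c - 2 * π * l / R) (c + 2 * π * l / R), 0 ≤ e θ)
    (hin : ∀ θ ∈ Icc (c - 2 * π * l / R) (c + 2 * π * l / R),
      l * Real.log (s₀ - R + η) + K < u (polar R (s₀, θ)) →
      1 - radG R u (s₀, θ) / Wgraph u (polar R (s₀, θ)) ≤ e θ)
    {a b c₁ d₁ m : ℝ} (ha : s₀ ≤ a) (hab : a ≤ b) (hb : b ≤ s₁)
    (hc₁ : c - 2 * π * l / R < c₁) (hcd : c₁ ≤ d₁) (hd₁ : d₁ < c + 2 * π * l / R)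
    (hm : ∀ x ∈ Icc (a, c₁) (b, d₁),
      m ≤ Real.smoothTransition (excess R l η c K u x) * barC R l η c x) :
    m * ((b - a) * (d₁ - c₁)) ≤ s₀ * ∫ θ in (c - 2 * π * l / R)..(c + 2 * π * l / R), e θ := by
  have hR : 0 < R := by linarith
  set ω := 2 * π * l / R with hω
  have hω0 : 0 < ω := by positivity
  -- an upper bound for `u` on the closed sector
  obtain ⟨M, hM⟩ : ∃ M, ∀ x ∈ Icc s₀ s₁ ×ˢ Icc (c - ω) (c + ω), u (polar R x) ≤ M := by
    have hcont : ContinuousOn (fun x => u (polar R x)) (Icc s₀ s₁ ×ˢ Icc (c - ω) (c + ω)) := by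
      intro x hx
      exact ((cmc_differentiable hΩ hu (hbox x hx.1 hx.2)).1.continuousAt.comp
        (polar_continuous R).continuousAt).continuousWithinAt
    obtain ⟨M, hM⟩ := (isCompact_Icc.prod isCompact_Icc).bddAbove_image hcont
    exact ⟨M, fun x hx => hM (mem_image_of_mem _ hx)⟩
  set L := l * Real.log (s₀ - R + η) with hL
  obtain ⟨β, hβ₀, hβω, hβN⟩ := exists_side (R := R) (l := l) (β₀ := max |c₁ - c| |d₁ - c|)
    (N := (M - K - L) / (4 * l)) hl hR (le_max_of_le_left (abs_nonneg _))
    (by rw [max_lt_iff, abs_lt, abs_lt]; refine ⟨⟨?_, ?_⟩, ?_, ?_⟩ <;> linarith)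
  have hβc := abs_le.1 ((le_max_left _ _).trans hβ₀)
  have hβd := abs_le.1 ((le_max_right _ _).trans hβ₀)
  have hβ0 : 0 ≤ β := (le_max_of_le_left (abs_nonneg _)).trans hβ₀
  have hsub : Icc (c - β) (c + β) ⊆ Icc (c - ω) (c + ω) :=
    Icc_subset_Icc (by linarith) (by linarith)
  set A : ℝ × ℝ := (s₀, c - β) with hA
  set B : ℝ × ℝ := (s₁, c + β) with hB
  have hbx : ∀ x ∈ Icc A B, x.1 ∈ Icc s₀ s₁ ∧ x.2 ∈ Icc (c - β) (c + β) := fun x hx =>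
    ⟨⟨hx.1.1, hx.2.1⟩, ⟨hx.1.2, hx.2.2⟩⟩
  have hdiff : ∀ x ∈ Icc A B, DifferentiableAt ℝ (fluxS R l η c K u) x ∧
      DifferentiableAt ℝ (fluxT R l η c K u) x ∧
      ContinuousAt (fluxDiv R l η c K u) x ∧ ContinuousAt (barC R l η c) x ∧
      ContinuousAt (excess R l η c K u) x ∧
      ContinuousAt (fun y => radG R u y / Wgraph u (polar R y)) x := by
    intro x hx
    obtain ⟨h1, h2⟩ := hbx x hx
    exact flux_differentiableAt hΩ hu (hbox x h1 (hsub h2)) (by linarith [h1.1])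
      (by linarith [h1.1]) (cos_pos_sector hl hR hβω h2)
  have hdiv : ∀ x ∈ Icc A B, fderiv ℝ (fluxS R l η c K u) x (1, 0)
      + fderiv ℝ (fluxT R l η c K u) x (0, 1) = fluxDiv R l η c K u x := by
    intro x hx
    obtain ⟨h1, h2⟩ := hbx x hx
    obtain ⟨D₁, D₂, e₁, e₂, e₃⟩ := flux_hasDerivAt (η := η) (K := K) hRH hl hΩ hu
      (hbox x h1 (hsub h2)) (by linarith [h1.1]) (by linarith [h1.1]) (cos_pos_sector hl hR hβω h2)
    have l₁ : HasDerivAt (fun s : ℝ => (s, x.2)) ((1 : ℝ), (0 : ℝ)) x.1 :=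
      (hasDerivAt_id x.1).prodMk (hasDerivAt_const _ _)
    have l₂ : HasDerivAt (fun t : ℝ => (x.1, t)) ((0 : ℝ), (1 : ℝ)) x.2 :=
      (hasDerivAt_const _ _).prodMk (hasDerivAt_id x.2)
    have f₁ := HasFDerivAt.comp_hasDerivAt (l := fluxS R l η c K u) x.1
      (f := fun s : ℝ => (s, x.2)) (hdiff x hx).1.hasFDerivAt l₁
    have f₂ := HasFDerivAt.comp_hasDerivAt (l := fluxT R l η c K u) x.2
      (f := fun t : ℝ => (x.1, t)) (hdiff x hx).2.1.hasFDerivAt l₂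
    rw [← e₃, e₁.unique f₁, e₂.unique f₂]
  have hAB : A ≤ B := ⟨hs01.le, by simp only [hA, hB]; linarith⟩
  have hInt : IntegrableOn (fluxDiv R l η c K u) (Icc A B) :=
    ContinuousOn.integrableOn_Icc fun x hx => (hdiff x hx).2.2.1.continuousWithinAt
  have key := integral_divergence_prod_Icc_of_hasFDerivAt_of_le (fluxS R l η c K u)
    (fluxT R l η c K u) (fderiv ℝ (fluxS R l η c K u)) (fderiv ℝ (fluxT R l η c K u)) A B hAB
    (fun x hx => (hdiff x hx).1.continuousAt.continuousWithinAt)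
    (fun x hx => (hdiff x hx).2.1.continuousAt.continuousWithinAt)
    (fun x hx => (hdiff x ⟨⟨hx.1.1.le, hx.2.1.le⟩, ⟨hx.1.2.le, hx.2.2.le⟩⟩).1.hasFDerivAt)
    (fun x hx => (hdiff x ⟨⟨hx.1.1.le, hx.2.1.le⟩, ⟨hx.1.2.le, hx.2.2.le⟩⟩).2.1.hasFDerivAt)
    (hInt.congr_fun (fun x hx => (hdiv x hx).symm) measurableSet_Icc)
  rw [setIntegral_congr_fun measurableSet_Icc hdiv] at key
  -- the flux vanishes on the two lateral sides and on the outer arc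
  have hlog : ∀ s, s₀ ≤ s → L ≤ l * Real.log (s - R + η) := fun s hs =>
    mul_le_mul_of_nonneg_left (Real.log_le_log hη0 (by linarith)) hl.le
  have hN : M - K - L ≤ -(4 * l * Real.log (Real.cos (R / (4 * l) * β))) := by
    rw [div_le_iff₀ (by positivity)] at hβN
    linarith
  have hside : ∀ s ∈ Icc s₀ s₁, ∀ θ ∈ Icc (c - β) (c + β),
      Real.cos (R / (4 * l) * (θ - c)) = Real.cos (R / (4 * l) * β) →
      fluxT R l η c K u (s, θ) = 0 := by
    intro s hs θ hθ hcos
    unfold fluxT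
    rw [Real.smoothTransition.zero_of_nonpos, zero_mul]
    have := hM (s, θ) ⟨hs, hsub hθ⟩
    have := hlog s hs.1
    simp only [excess, barrier, hcos]
    linarith
  have z1 : ∫ x in A.1..B.1, fluxT R l η c K u (x, B.2) = 0 := by
    rw [intervalIntegral.integral_congr (g := fun _ => (0 : ℝ))]
    · simp
    · intro s hs
      rw [uIcc_of_le hs01.le] at hs
      exact hside s hs _ ⟨by linarith, le_refl _⟩ (by congr 1; ring)
  have z2 : ∫ x in A.1..B.1, fluxT R l η c K u (x, A.2) = 0 := by
    rw [intervalIntegral.integral_congr (g := fun _ => (0 : ℝ))]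
    · simp
    · intro s hs
      rw [uIcc_of_le hs01.le] at hs
      refine hside s hs _ ⟨le_refl _, by linarith⟩ ?_
      rw [← Real.cos_neg]; congr 1; ring
  have hlogcos : ∀ θ ∈ Icc (c - β) (c + β),
      Real.log (Real.cos (R / (4 * l) * (θ - c))) ≤ 0 := fun θ hθ =>
    Real.log_nonpos (cos_pos_sector hl hR hβω hθ).le (Real.cos_le_one _)
  have hβle : c - β ≤ c + β := by linarith
  have z3 : ∫ y in A.2..B.2, fluxS R l η c K u (B.1, y) = 0 := by
    rw [intervalIntegral.integral_congr (g := fun _ => (0 : ℝ))]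
    · simp
    · intro θ hθ
      rw [uIcc_of_le hβle] at hθ
      simp only [fluxS]
      rw [Real.smoothTransition.zero_of_nonpos, zero_mul]
      have h1 := hout θ (hsub hθ)
      have h2 := hlogcos θ hθ
      simp only [excess, barrier, hB]
      nlinarith
  -- on the inner arc the flux is controlled by `e`
  have heβ : IntervalIntegrable e volume (c - β) (c + β) := he.mono_set (by
    rw [uIcc_of_le hβle, uIcc_of_le (by linarith)]; exact hsub)
  have hs₀ : 0 < s₀ := by linarith
  have z4 : -(∫ y in A.2..B.2, fluxS R l η c K u (A.1, y)) ≤ s₀ * ∫ θ in (c - β)..(c + β), e θ := by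
    rw [← intervalIntegral.integral_neg, ← intervalIntegral.integral_const_mul]
    refine intervalIntegral.integral_mono_on hβle ?_ (heβ.const_mul _) ?_
    · refine (ContinuousOn.intervalIntegrable ?_).neg
      rw [uIcc_of_le hβle]
      intro θ hθ
      have h1 : ContinuousAt (fluxS R l η c K u) (s₀, θ) :=
        (hdiff (s₀, θ) ⟨⟨le_refl _, hθ.1⟩, ⟨hs01.le, hθ.2⟩⟩).1.continuousAt
      exact (ContinuousAt.comp (f := fun θ : ℝ => (s₀, θ)) h1
        (by fun_prop)).continuousWithinAt
    · intro θ hθ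
      have hT0 := Real.smoothTransition.nonneg (excess R l η c K u (s₀, θ))
      have hT1 := Real.smoothTransition.le_one (excess R l η c K u (s₀, θ))
      have hE := he0 θ (hsub hθ)
      have hpW : barP R l η (s₀, θ) / barW R l η c (s₀, θ) ≤ 1 := by
        rw [div_le_one (barW_pos _ _ _ _ _)]
        refine le_of_abs_le (Real.abs_le_sqrt ?_)
        nlinarith [sq_nonneg (barQ R l c (s₀, θ))]
      by_cases hex : excess R l η c K u (s₀, θ) ≤ 0
      · simp only [fluxS, hA]
        rw [Real.smoothTransition.zero_of_nonpos hex]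
        simpa using mul_nonneg hs₀.le hE
      · have h2 := hlogcos θ hθ
        have h3 : L + K < u (polar R (s₀, θ)) := by
          simp only [excess, barrier, not_le] at hex
          nlinarith
        have h4 := hin θ (hsub hθ) h3
        simp only [fluxS, hA]
        set T := Real.smoothTransition (excess R l η c K u (s₀, θ))
        set α := radG R u (s₀, θ) / Wgraph u (polar R (s₀, θ))
        set γ := barP R l η (s₀, θ) / barW R l η c (s₀, θ)
        have h5 : T * (γ - α) ≤ e θ := by
          have : T * (γ - α) ≤ T * e θ := mul_le_mul_of_nonneg_left (by linarith) hT0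
          nlinarith
        have h6 : -(T * (s₀ * α - s₀ * γ)) = s₀ * (T * (γ - α)) := by ring
        rw [h6]
        exact mul_le_mul_of_nonneg_left h5 hs₀.le
  have z5 : ∫ θ in (c - β)..(c + β), e θ ≤ ∫ θ in (c - ω)..(c + ω), e θ := by
    refine intervalIntegral.integral_mono_interval (by linarith) hβle (by linarith) ?_ he
    refine (ae_restrict_iff' measurableSet_Ioc).2 (Eventually.of_forall fun θ hθ => ?_)
    exact he0 θ ⟨hθ.1.le, hθ.2⟩
  -- the divergence is nonnegative, and at least `m` on the small rectangle
  have hpos : ∀ x ∈ Icc A B, 0 ≤ fluxDiv R l η c K u x := by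
    intro x hx
    obtain ⟨h1, h2⟩ := hbx x hx
    refine le_trans ?_ (fluxDiv_ge (by linarith [h1.1]))
    exact mul_nonneg (Real.smoothTransition.nonneg _)
      (barC_pos hl hlR (by linarith [h1.1]) (by linarith [h1.1]) (by linarith [h1.2])).le
  have hJ : Icc (a, c₁) (b, d₁) ⊆ Icc A B :=
    Icc_subset_Icc ⟨ha, by simp only [hA]; linarith⟩ ⟨hb, by simp only [hB]; linarith⟩
  have i1 : ∫ x in Icc (a, c₁) (b, d₁), fluxDiv R l η c K u x
      ≤ ∫ x in Icc A B, fluxDiv R l η c K u x :=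
    setIntegral_mono_set hInt
      ((ae_restrict_iff' measurableSet_Icc).2 (Eventually.of_forall hpos))
      (Eventually.of_forall hJ)
  have i2 : m * ((b - a) * (d₁ - c₁)) ≤ ∫ x in Icc (a, c₁) (b, d₁), fluxDiv R l η c K u x := by
    have hvol : (volume : Measure (ℝ × ℝ)).real (Icc (a, c₁) (b, d₁)) = (b - a) * (d₁ - c₁) := by
      rw [← Icc_prod_Icc, Measure.volume_eq_prod, measureReal_prod_prod,
        Real.volume_real_Icc_of_le hab, Real.volume_real_Icc_of_le hcd]
    have : ∫ _ in Icc (a, c₁) (b, d₁), m = m * ((b - a) * (d₁ - c₁)) := by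
      rw [setIntegral_const, hvol, smul_eq_mul, mul_comm]
    rw [← this]
    refine setIntegral_mono_on (integrableOn_const (by
      exact isCompact_Icc.measure_lt_top.ne)) (hInt.mono_set hJ) measurableSet_Icc ?_
    intro x hx
    exact (hm x hx).trans (fluxDiv_ge (by linarith [(hbx x (hJ hx)).1.1]))
  rw [z1, z2, z3] at key
  have := mul_le_mul_of_nonneg_left z5 hs₀.le
  linarith

/-! ### Comparison of the limit with the barrier -/

theorem enorm2_continuous : Continuous enorm2 := by
  unfold enorm2; fun_prop

theorem enorm2_polar {R : ℝ} {x : ℝ × ℝ} (hx : 0 ≤ x.1) : enorm2 (polar R x - (R, 0)) = x.1 := by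
  unfold enorm2 polar
  have : (R + x.1 * Real.cos x.2 - R) ^ 2 + (x.1 * Real.sin x.2 - 0) ^ 2 = x.1 ^ 2 := by
    have := Real.sin_sq_add_cos_sq x.2
    linear_combination x.1 ^ 2 * this
  simp only [Prod.mk_sub_mk]
  rw [this, Real.sqrt_sq hx]

/-- If the inner flux of infinitely many `u n` is arbitrarily small, in the form of the bounds given
by `flux_ineq`, then the limit lies below the barrier: a point of positive excess would be the
centre of a rectangle on which the cutoff times the curvature defect is bounded below, uniformly in
`n`. -/
theorem limit_le_barrier {R l η c K : ℝ} (hl : 0 < l) (hlR : 2 * l ≤ R)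
    (hη : 0 < η) (hηl : η ≤ l / 2) {D : Set (ℝ × ℝ)} (hD : IsOpen D) {H : ℝ}
    {u : ℕ → ℝ × ℝ → ℝ} {v : ℝ × ℝ → ℝ} (hv : IsCMCSolution H D v)
    (hconv : ∀ E : Set (ℝ × ℝ), IsCompact E → E ⊆ D → TendstoUniformlyOn u v atTop E)
    (hbox : ∀ x : ℝ × ℝ, x.1 ∈ Ioc R (R + l / 2) →
      x.2 ∈ Icc (c - 2 * π * l / R) (c + 2 * π * l / R) → polar R x ∈ D)
    (hflux : ∀ a ∈ Ioo R (R + l / 2), ∀ ε > 0, ∃ᶠ n in atTop, ∀ b c₁ d₁ m : ℝ, a ≤ b →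
      b ≤ R + l / 2 → c - 2 * π * l / R < c₁ → c₁ ≤ d₁ → d₁ < c + 2 * π * l / R →
      (∀ x ∈ Icc (a, c₁) (b, d₁),
        m ≤ Real.smoothTransition (excess R l η c K (u n) x) * barC R l η c x) →
      m * ((b - a) * (d₁ - c₁)) ≤ ε)
    {x : ℝ × ℝ} (hx1 : x.1 ∈ Ioo R (R + l / 2))
    (hx2 : x.2 ∈ Ioo (c - 2 * π * l / R) (c + 2 * π * l / R)) :
    v (polar R x) ≤ barrier R l η c x + K := by
  by_contra hcon
  push Not at hcon
  have hR : 0 < R := by linarith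
  have hpos : 0 < excess R l η c K v x := by unfold excess; linarith
  set ω := 2 * π * l / R with hω
  have hcos : 0 < Real.cos (R / (4 * l) * (x.2 - c)) := by
    refine cos_pos_sector (β := |x.2 - c|) hl hR ?_ ?_
    · rw [abs_lt]; constructor <;> linarith [hx2.1, hx2.2]
    · have h1 := neg_abs_le (x.2 - c)
      have h2 := le_abs_self (x.2 - c)
      constructor <;> linarith
  obtain ⟨-, -, -, hcC, hcE, -⟩ := flux_differentiableAt (η := η) (K := K) hD hv
    (hbox x ⟨hx1.1, hx1.2.le⟩ ⟨hx2.1.le, hx2.2.le⟩) (by linarith [hx1.1])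
    (by linarith [hx1.1]) hcos
  have hC0 : 0 < barC R l η c x :=
    barC_pos hl hlR hx1.1.le (by linarith [hx1.1]) (by linarith [hx1.2])
  set d := excess R l η c K v x / 3 with hd
  set g := barC R l η c x / 2 with hg
  have hd0 : 0 < d := by positivity
  have hg0 : 0 < g := by positivity
  have ev : ∀ᶠ y in nhds x, (2 * d < excess R l η c K v y ∧ g < barC R l η c y) ∧
      y ∈ Ioo R (R + l / 2) ×ˢ Ioo (c - ω) (c + ω) := by
    refine ((hcE.eventually_const_lt (by linarith)).and
      (hcC.eventually_const_lt (by linarith))).and ?_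
    exact (isOpen_Ioo.prod isOpen_Ioo).mem_nhds ⟨hx1, hx2⟩
  obtain ⟨ρ, hρ, hball⟩ := Metric.nhds_basis_closedBall.eventually_iff.1 ev
  have hJ : ∀ y ∈ Icc (x.1 - ρ, x.2 - ρ) (x.1 + ρ, x.2 + ρ), y ∈ Metric.closedBall x ρ := by
    intro y hy
    rw [← Prod.mk.eta (p := x), ← closedBall_prod_same, Real.closedBall_eq_Icc,
      Real.closedBall_eq_Icc]
    exact ⟨⟨hy.1.1, hy.2.1⟩, ⟨hy.1.2, hy.2.2⟩⟩
  have hlow : (x.1 - ρ, x.2 - ρ) ∈ Icc (x.1 - ρ, x.2 - ρ) (x.1 + ρ, x.2 + ρ) :=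
    ⟨le_refl _, ⟨by simp only; linarith, by simp only; linarith⟩⟩
  have hupp : (x.1 + ρ, x.2 + ρ) ∈ Icc (x.1 - ρ, x.2 - ρ) (x.1 + ρ, x.2 + ρ) :=
    ⟨⟨by simp only; linarith, by simp only; linarith⟩, le_refl _⟩
  have hlow' := (hball (hJ _ hlow)).2
  have hupp' := (hball (hJ _ hupp)).2
  set J := Icc (x.1 - ρ, x.2 - ρ) (x.1 + ρ, x.2 + ρ) with hJdef
  have hunif := hconv (polar R '' J) (isCompact_Icc.image (polar_continuous R)) (by
    rintro _ ⟨y, hy, rfl⟩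
    have := (hball (hJ y hy)).2
    exact hbox y ⟨this.1.1, this.1.2.le⟩ ⟨this.2.1.le, this.2.2.le⟩)
  have hunif' := Metric.tendstoUniformlyOn_iff.1 hunif d hd0
  have hT : 0 < Real.smoothTransition d := Real.smoothTransition.pos_of_pos hd0
  set m := Real.smoothTransition d * g with hm
  have hm0 : 0 < m := by positivity
  have hfr := hflux (x.1 - ρ) hlow'.1 (m * ((2 * ρ) * (2 * ρ)) / 2) (by positivity)
  obtain ⟨n, hn, hn'⟩ := (hfr.and_eventually hunif').exists
  have := hn (x.1 + ρ) (x.2 - ρ) (x.2 + ρ) m (by linarith) hupp'.1.2.le hlow'.2.1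
    (by linarith) hupp'.2.2 (by
      intro y hy
      obtain ⟨⟨h1, h2⟩, -⟩ := hball (hJ y hy)
      have h3 := hn' _ (mem_image_of_mem _ hy)
      rw [Real.dist_eq] at h3
      have h4 := (abs_lt.1 h3).2
      have h5 : d ≤ excess R l η c K (u n) y := by
        unfold excess at h1 ⊢; linarith
      exact mul_le_mul (Real.smoothTransition.monotone h5) h2.le hg0.le
        (Real.smoothTransition.nonneg _))
  have e : m * ((x.1 + ρ - (x.1 - ρ)) * (x.2 + ρ - (x.2 - ρ))) = m * ((2 * ρ) * (2 * ρ)) := by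
    ring
  rw [e] at this
  have : 0 < m * ((2 * ρ) * (2 * ρ)) := by positivity
  linarith

/-- The arc determines its circle: three of its points force the centre to be `(R, 0)`. -/
theorem divergence_center {R r : ℝ} (hr : 0 < r) (hR : 0 < R) {z : ℝ × ℝ}
    (h : ∀ q ∈ {p : ℝ × ℝ | enorm2 p < r ∧ enorm2 (p - (R, 0)) = R}, enorm2 (q - z) = R) :
    z = (R, 0) := by
  -- three points of the arc
  have hev : ∀ᶠ t in nhds (0 : ℝ), enorm2 (polar R (R, π + t)) < r := by
    have hc : Continuous fun t : ℝ => enorm2 (polar R (R, π + t)) :=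
      enorm2_continuous.comp ((polar_continuous R).comp (by fun_prop))
    refine hc.continuousAt.eventually_lt_const ?_
    simpa [polar, enorm2] using hr
  obtain ⟨ρ, hρ, hball⟩ := Metric.eventually_nhds_iff.1 hev
  set t := min (ρ / 2) 1 with ht
  have ht0 : 0 < t := lt_min (by linarith) one_pos
  have htρ : t < ρ := lt_of_le_of_lt (min_le_left _ _) (by linarith)
  have key : ∀ τ : ℝ, |τ| < ρ →
      (R + R * Real.cos (π + τ) - z.1) ^ 2 + (R * Real.sin (π + τ) - z.2) ^ 2 = R ^ 2 := by
    intro τ hτ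
    have h1 := h (polar R (R, π + τ)) ⟨hball (by simpa using hτ), enorm2_polar hR.le⟩
    have h2 : enorm2 (polar R (R, π + τ) - z) ^ 2 = R ^ 2 := by rw [h1]
    unfold enorm2 at h2
    rw [Real.sq_sqrt (by positivity)] at h2
    exact h2
  have k0 := key 0 (by simpa using hρ)
  have k1 := key t (by rwa [abs_of_pos ht0])
  have k2 := key (-t) (by rwa [abs_neg, abs_of_pos ht0])
  rw [add_comm π, Real.cos_add_pi, Real.sin_add_pi] at k0 k1 k2
  rw [Real.cos_neg, Real.sin_neg] at k2
  rw [Real.cos_zero, Real.sin_zero] at k0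
  have hs : 0 < Real.sin t := Real.sin_pos_of_pos_of_lt_pi ht0
    (lt_of_le_of_lt (min_le_right _ _) (by linarith [Real.pi_gt_three]))
  have hc : Real.cos t < 1 := by
    nlinarith [Real.sin_sq_add_cos_sq t, Real.cos_le_one t, pow_pos hs 2]
  have hz2 : z.2 = 0 := by
    have : R * Real.sin t * z.2 = 0 := by linear_combination (k1 - k2) / 4
    rcases mul_eq_zero.1 this with h' | h'
    · exact absurd h' (by positivity)
    · exact h'
  have hz1 : z.1 = R := by
    rw [hz2] at k0 k1
    have : R * (1 - Real.cos t) * (R - z.1) = 0 := by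
      linear_combination (k1 - k0) / 2 - R ^ 2 / 2 * Real.sin_sq_add_cos_sq t
    rcases mul_eq_zero.1 this with h' | h'
    · exact absurd h' (mul_pos hR (by linarith)).ne'
    · linarith
  exact Prod.ext hz1 hz2

theorem radG_le (R : ℝ) (u : ℝ × ℝ → ℝ) (x : ℝ × ℝ) :
    |radG R u x / Wgraph u (polar R x)| ≤ 1 := by
  rw [abs_div, abs_of_pos (Wgraph_pos _ _), div_le_one (Wgraph_pos _ _), Wgraph_polar]
  refine Real.abs_le_sqrt ?_
  nlinarith [sq_nonneg (angG R u x)]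

/-- A right inverse `F` of `polar R` that is continuous at a given point of the circle. The angle is
measured from that point, so that the branch cut of the argument lies on the opposite side. -/
theorem exists_polar {R : ℝ} (hR : 0 < R) {P : ℝ × ℝ} (hP : enorm2 (P - (R, 0)) = R) :
    ∃ (c : ℝ) (F : ℝ × ℝ → ℝ × ℝ), F P = (R, c) ∧ ContinuousAt F P ∧
      ∀ Q, polar R (F Q) = Q ∧ (F Q).1 = enorm2 (Q - (R, 0)) := by
  have hn : ∀ Q : ℝ × ℝ, ‖(⟨Q.1 - R, Q.2⟩ : ℂ)‖ = enorm2 (Q - (R, 0)) := by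
    intro Q
    rw [Complex.norm_eq_sqrt_sq_add_sq]
    simp [enorm2]
  let Z : ℝ × ℝ → ℂ := fun Q => ⟨Q.1 - R, Q.2⟩
  have hZc : Continuous Z := by
    have : Z = fun Q => ((Q.1 - R : ℝ) : ℂ) + (Q.2 : ℂ) * Complex.I := by
      funext Q; apply Complex.ext <;> simp [Z]
    rw [this]; fun_prop
  have hZP : Z P ≠ 0 := by
    rw [← norm_ne_zero_iff]; change ‖(⟨P.1 - R, P.2⟩ : ℂ)‖ ≠ 0; rw [hn, hP]; exact hR.ne'
  refine ⟨Complex.arg (Z P), fun Q => (enorm2 (Q - (R, 0)),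
    Complex.arg (Z P) + Complex.arg (Z Q / Z P)), ?_, ?_, ?_⟩
  · simp [hP, div_self hZP]
  · refine ContinuousAt.prodMk ?_ ?_
    · exact (enorm2_continuous.comp (by fun_prop : Continuous fun Q : ℝ × ℝ => Q - (R, 0))).continuousAt
    · refine continuousAt_const.add (ContinuousAt.comp (g := Complex.arg) ?_
        (hZc.div_const (Z P)).continuousAt)
      rw [div_self hZP]
      exact Complex.continuousAt_arg (by simp)
  · intro Q
    refine ⟨?_, rfl⟩
    have h1 : enorm2 (Q - (R, 0)) = ‖Z P‖ * ‖Z Q / Z P‖ := by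
      rw [← norm_mul, mul_div_cancel₀ _ hZP]; exact (hn Q).symm
    have h2 : Z P * (Z Q / Z P) = Z Q := mul_div_cancel₀ _ hZP
    have a1 := Complex.norm_mul_cos_arg (Z P)
    have a2 := Complex.norm_mul_sin_arg (Z P)
    have b1 := Complex.norm_mul_cos_arg (Z Q / Z P)
    have b2 := Complex.norm_mul_sin_arg (Z Q / Z P)
    have r1 := congrArg Complex.re h2
    have r2 := congrArg Complex.im h2
    rw [Complex.mul_re, ← a1, ← a2, ← b1, ← b2] at r1
    rw [Complex.mul_im, ← a1, ← a2, ← b1, ← b2] at r2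
    change _ = Q.1 - R at r1
    change _ = Q.2 at r2
    simp only [polar, h1, Real.cos_add, Real.sin_add]
    ext
    · simp only; linear_combination r1
    · simp only; linear_combination r2

/-! ### Smallness of the inner flux in the two cases -/

theorem exterior_isOpen (R r : ℝ) :
    IsOpen {p : ℝ × ℝ | enorm2 p < r ∧ R < enorm2 (p - (R, 0))} :=
  (isOpen_lt enorm2_continuous continuous_const).inter
    (isOpen_lt continuous_const (enorm2_continuous.comp (by fun_prop)))

/-- When `u` tends to `-∞` on the arc, its excess is nonpositive on inner arcs close to `C`, so the
bound of `flux_ineq` is zero. -/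
theorem flux_small_of_boundary {R H l η c K r : ℝ} (hRH : 2 * H = 1 / R) (hl : 0 < l)
    (hlR : 2 * l ≤ R) (hη : 0 < η) (hηl : η ≤ l / 2) {u : ℝ × ℝ → ℝ}
    (hu : IsCMCSolution H {p : ℝ × ℝ | enorm2 p < r ∧ R < enorm2 (p - (R, 0))} u)
    (hbdry : ∀ P ∈ {p : ℝ × ℝ | enorm2 p < r ∧ enorm2 (p - (R, 0)) = R}, ∀ M : ℝ, ∃ δ > 0,
      ∀ Q ∈ {p : ℝ × ℝ | enorm2 p < r ∧ R < enorm2 (p - (R, 0))}, enorm2 (Q - P) < δ → u Q < -M)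
    (hbox : ∀ x : ℝ × ℝ, x.1 ∈ Icc R (R + l / 2) →
      x.2 ∈ Icc (c - 2 * π * l / R) (c + 2 * π * l / R) → enorm2 (polar R x) < r)
    (hout : ∀ θ ∈ Icc (c - 2 * π * l / R) (c + 2 * π * l / R),
      u (polar R (R + l / 2, θ)) ≤ l * Real.log (l / 2) + K)
    {a b c₁ d₁ m : ℝ} (ha : a ∈ Ioo R (R + l / 2)) (hab : a ≤ b) (hb : b ≤ R + l / 2)
    (hc₁ : c - 2 * π * l / R < c₁) (hcd : c₁ ≤ d₁) (hd₁ : d₁ < c + 2 * π * l / R)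
    (hm : ∀ x ∈ Icc (a, c₁) (b, d₁),
      m ≤ Real.smoothTransition (excess R l η c K u x) * barC R l η c x) :
    m * ((b - a) * (d₁ - c₁)) ≤ 0 := by
  have hR : 0 < R := by linarith
  have hext : ∀ x : ℝ × ℝ, x.1 ∈ Ioc R (R + l / 2) →
      x.2 ∈ Icc (c - 2 * π * l / R) (c + 2 * π * l / R) →
      polar R x ∈ {p : ℝ × ℝ | enorm2 p < r ∧ R < enorm2 (p - (R, 0))} := fun x h1 h2 =>
    ⟨hbox x ⟨h1.1.le, h1.2⟩ h2, by rw [enorm2_polar (by linarith [h1.1])]; exact h1.1⟩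
  have key : ∀ᶠ s in nhds R, ∀ θ ∈ Icc (c - 2 * π * l / R) (c + 2 * π * l / R),
      polar R (s, θ) ∈ {p : ℝ × ℝ | enorm2 p < r ∧ R < enorm2 (p - (R, 0))} →
      u (polar R (s, θ)) < l * Real.log η + K := by
    refine isCompact_Icc.eventually_forall_of_forall_eventually fun θ hθ => ?_
    obtain ⟨δ, hδ, h⟩ := hbdry (polar R (R, θ))
      ⟨hbox (R, θ) ⟨le_refl _, by simp only; linarith⟩ hθ, enorm2_polar hR.le⟩
      (-(l * Real.log η + K))
    have hc : Continuous fun z : ℝ × ℝ => enorm2 (polar R z - polar R (R, θ)) :=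
      enorm2_continuous.comp ((polar_continuous R).sub continuous_const)
    have h0 : enorm2 (polar R (R, θ) - polar R (R, θ)) < δ := by simpa [enorm2] using hδ
    filter_upwards [hc.continuousAt.eventually_lt_const h0] with z hz hzD
    simpa using h _ hzD hz
  obtain ⟨ρ, hρ, hball⟩ := Metric.eventually_nhds_iff.1 key
  obtain ⟨s₀, hs₀, hs₀'⟩ : ∃ s₀, R < s₀ ∧ s₀ < min a (R + ρ) :=
    exists_between (lt_min ha.1 (by linarith))
  have hs₀a := (lt_min_iff.1 hs₀').1
  have hs₀ρ := (lt_min_iff.1 hs₀').2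
  have := flux_ineq (η := η) (e := fun _ => 0) hRH hl hlR (exterior_isOpen R r) hu
    hs₀.le (hs₀a.trans ha.2)
    (by linarith) (by linarith)
    (fun x h1 h2 => hext x ⟨by linarith [h1.1], h1.2⟩ h2)
    (fun θ hθ => (hout θ hθ).trans (by gcongr; linarith))
    intervalIntegrable_const (fun _ _ => le_refl _)
    (fun θ hθ hlt => by
      exfalso
      have h1 := hball (y := s₀) (by rw [Real.dist_eq, abs_lt]; constructor <;> linarith) θ hθ
        (hext (s₀, θ) ⟨hs₀, by simp only; linarith [ha.2]⟩ hθ)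
      have h2 : l * Real.log η ≤ l * Real.log (s₀ - R + η) := by gcongr; linarith
      linarith)
    hs₀a.le hab hb hc₁ hcd hd₁ hm
  simpa using this

/-- When the normals converge along the arc `C` to its curvature vector, the inner flux through `C`
tends to zero by dominated convergence. -/
theorem flux_small_of_divergence {R H l η c K r : ℝ} (hRH : 2 * H = 1 / R) (hl : 0 < l)
    (hlR : 2 * l ≤ R) (hη : 0 < η) (hηl : η ≤ l / 2) {w : ℕ → ℝ × ℝ → ℝ}
    (hw : ∀ n, IsCMCSolution H {p : ℝ × ℝ | enorm2 p < r} (w n))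
    (hdiv : ∀ Q ∈ {p : ℝ × ℝ | enorm2 p < r ∧ enorm2 (p - (R, 0)) = R},
      Tendsto (fun n => normalVec (w n) Q) atTop
        (nhds (2 * H * (R - Q.1), 2 * H * (0 - Q.2), 0)))
    (hbox : ∀ x : ℝ × ℝ, x.1 ∈ Icc R (R + l / 2) →
      x.2 ∈ Icc (c - 2 * π * l / R) (c + 2 * π * l / R) → enorm2 (polar R x) < r)
    {ε : ℝ} (hε : 0 < ε) :
    ∀ᶠ n in atTop, (∀ θ ∈ Icc (c - 2 * π * l / R) (c + 2 * π * l / R),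
        w n (polar R (R + l / 2, θ)) ≤ l * Real.log (l / 2) + K) →
      ∀ a b c₁ d₁ m : ℝ, a ∈ Ioo R (R + l / 2) → a ≤ b → b ≤ R + l / 2 →
      c - 2 * π * l / R < c₁ → c₁ ≤ d₁ → d₁ < c + 2 * π * l / R →
      (∀ x ∈ Icc (a, c₁) (b, d₁),
        m ≤ Real.smoothTransition (excess R l η c K (w n) x) * barC R l η c x) →
      m * ((b - a) * (d₁ - c₁)) ≤ ε := by
  have hR : 0 < R := by linarith
  have hΩ : IsOpen {p : ℝ × ℝ | enorm2 p < r} := isOpen_lt enorm2_continuous continuous_const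
  have hω : c - 2 * π * l / R ≤ c + 2 * π * l / R := by
    have : 0 < 2 * π * l / R := by positivity
    linarith
  have hRl : R ∈ Icc R (R + l / 2) := ⟨le_refl _, by linarith⟩
  let e : ℕ → ℝ → ℝ := fun n θ => 1 - radG R (w n) (R, θ) / Wgraph (w n) (polar R (R, θ))
  have hcont : ∀ n, ContinuousOn (e n) (Icc (c - 2 * π * l / R) (c + 2 * π * l / R)) := by
    intro n θ hθ
    -- the sector parameters are irrelevant here; centring at `θ` makes the cosine equal to `1`
    obtain ⟨-, -, -, -, -, h⟩ := flux_differentiableAt (R := R) (x := (R, θ)) (l := 1) (η := 1)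
      (c := θ) (K := 0) hΩ (hw n) (hbox (R, θ) hRl hθ) hR (by simp) (by simp)
    have h2 : ContinuousAt (fun t : ℝ => radG R (w n) (R, t) / Wgraph (w n) (polar R (R, t))) θ :=
      ContinuousAt.comp (f := fun t : ℝ => (R, t)) (x := θ) h (by fun_prop)
    exact (continuousAt_const.sub h2).continuousWithinAt
  have hInt : ∀ n, IntervalIntegrable (e n) volume (c - 2 * π * l / R) (c + 2 * π * l / R) :=
    fun n => ContinuousOn.intervalIntegrable (by rw [uIcc_of_le hω]; exact hcont n)
  have hlim : Tendsto (fun n => ∫ θ in (c - 2 * π * l / R)..(c + 2 * π * l / R), e n θ) atTop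
      (nhds (∫ θ in (c - 2 * π * l / R)..(c + 2 * π * l / R), (0 : ℝ))) := by
    refine intervalIntegral.tendsto_integral_filter_of_dominated_convergence (fun _ => 2)
      (Eventually.of_forall fun n => (intervalIntegrable_iff.1 (hInt n)).aestronglyMeasurable)
      (Eventually.of_forall fun n => Eventually.of_forall fun θ _ => ?_)
      intervalIntegrable_const (Eventually.of_forall fun θ hθ => ?_)
    · have h := abs_le.1 (radG_le R (w n) (R, θ))
      rw [Real.norm_eq_abs, abs_le]
      constructor <;> simp only [e] <;> linarith [h.1, h.2]
    · rw [uIoc_of_le hω] at hθ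
      have h := hdiv (polar R (R, θ))
        ⟨hbox (R, θ) hRl ⟨hθ.1.le, hθ.2⟩, enorm2_polar hR.le⟩
      have h1 := (continuous_fst.tendsto _).comp h
      have h2 := ((continuous_fst.comp continuous_snd).tendsto _).comp h
      have h3 := ((h1.mul_const (Real.cos θ)).add (h2.mul_const (Real.sin θ))).const_add 1
      have e0 : (1 : ℝ) + (2 * H * (R - (polar R (R, θ)).1) * Real.cos θ
          + 2 * H * (0 - (polar R (R, θ)).2) * Real.sin θ) = 0 := by
        rw [hRH]; unfold polar
        have := Real.sin_sq_add_cos_sq θ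
        field_simp
        linear_combination (-R) * this
      simp only [Function.comp_def] at h3
      rw [e0] at h3
      refine h3.congr fun n => ?_
      simp only [e, normalVec, radG]
      ring
  have hlim' := hlim.const_mul R
  rw [intervalIntegral.integral_zero, mul_zero] at hlim'
  filter_upwards [hlim'.eventually_lt_const hε] with n hn hout a b c₁ d₁ m ha hab hb hc₁ hcd hd₁ hm
  refine le_trans ?_ hn.le
  exact flux_ineq (η := η) (s₁ := R + l / 2) hRH hl hlR hΩ (hw n) (le_refl R) (by linarith)
    (by linarith) (by linarith) hbox
    (fun θ hθ => (hout θ hθ).trans (by gcongr; linarith)) (hInt n)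
    (fun θ _ => by
      have := (abs_le.1 (radG_le R (w n) (R, θ))).2
      simp only [e]; linarith)
    (fun θ _ _ => le_refl _) ha.1.le hab hb hc₁ hcd hd₁ hm

/-! ### Conclusion -/

/-- A closed sector around a point of the arc that stays inside `D(r)`. -/
theorem exists_sector {R r c : ℝ} (hR : 0 < R) (hc : enorm2 (polar R (R, c)) < r) :
    ∃ l : ℝ, 0 < l ∧ 2 * l ≤ R ∧ ∀ x : ℝ × ℝ, x.1 ∈ Icc R (R + l / 2) →
      x.2 ∈ Icc (c - 2 * π * l / R) (c + 2 * π * l / R) → enorm2 (polar R x) < r := by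
  have hcont : Continuous fun x : ℝ × ℝ => enorm2 (polar R x) :=
    enorm2_continuous.comp (polar_continuous R)
  obtain ⟨ρ, hρ, hball⟩ := Metric.nhds_basis_closedBall.eventually_iff.1
    (hcont.continuousAt.eventually_lt_const hc)
  refine ⟨min (R / 2) (min ρ (ρ * R / (2 * π))), by positivity, ?_, ?_⟩
  · linarith [min_le_left (R / 2) (min ρ (ρ * R / (2 * π)))]
  set l := min (R / 2) (min ρ (ρ * R / (2 * π))) with hl
  have h0 : 0 < l := by positivity
  have h1 : l ≤ ρ := (min_le_right _ _).trans (min_le_left _ _)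
  have h2 : 2 * π * l / R ≤ ρ := by
    have : l ≤ ρ * R / (2 * π) := (min_le_right _ _).trans (min_le_right _ _)
    rw [le_div_iff₀ (by positivity)] at this
    rw [div_le_iff₀ hR]; linarith
  intro x hx1 hx2
  refine hball ?_
  rw [← closedBall_prod_same, Real.closedBall_eq_Icc, Real.closedBall_eq_Icc]
  exact ⟨⟨by linarith [hx1.1], by linarith [hx1.2]⟩, ⟨by linarith [hx2.1], by linarith [hx2.2]⟩⟩

/-- The barriers with `η = s - R` tend to `-∞` at the point `P = polar R (R, c)`. -/
theorem tendsto_bot_of_barrier {R l c K : ℝ} (hl : 0 < l) (hR : 0 < R) {P : ℝ × ℝ}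
    {F : ℝ × ℝ → ℝ × ℝ} (hFP : F P = (R, c)) (hFc : ContinuousAt F P)
    (hF : ∀ Q, polar R (F Q) = Q) {v : ℝ × ℝ → ℝ}
    (hle : ∀ x : ℝ × ℝ, x.1 ∈ Ioo R (R + l / 2) →
      x.2 ∈ Ioo (c - 2 * π * l / R) (c + 2 * π * l / R) →
      v (polar R x) ≤ barrier R l (x.1 - R) c x + K) (M : ℝ) :
    ∃ δ > 0, ∀ Q : ℝ × ℝ, R < (F Q).1 → enorm2 (Q - P) < δ → v Q < -M := by
  have hω : 0 < 2 * π * l / R := by positivity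
  set T := Real.exp ((-M - K + 4 * l * Real.log (1 / 2)) / l) / 2 with hT
  have hT0 : 0 < T := by positivity
  have ev : ∀ᶠ y in nhds (R, c), (y.1 < R + min (l / 2) T ∧
      1 / 2 < Real.cos (R / (4 * l) * (y.2 - c))) ∧
      y.2 ∈ Ioo (c - 2 * π * l / R) (c + 2 * π * l / R) := by
    refine Filter.Eventually.and (Filter.Eventually.and ?_ ?_) ?_
    · refine continuous_fst.continuousAt.eventually_lt_const ?_
      have : 0 < min (l / 2) T := by positivity
      simp only; linarith
    · have hc : Continuous fun y : ℝ × ℝ => Real.cos (R / (4 * l) * (y.2 - c)) := by fun_prop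
      exact hc.continuousAt.eventually_const_lt (by norm_num)
    · exact continuous_snd.continuousAt.eventually
        (Ioo_mem_nhds (by simp only; linarith) (by simp only; linarith))
  rw [← hFP] at ev
  obtain ⟨δ, hδ, hball⟩ := Metric.eventually_nhds_iff.1 (hFc.eventually ev)
  refine ⟨δ, hδ, fun Q hQ hQP => ?_⟩
  have hdist : dist Q P < δ := by
    refine lt_of_le_of_lt ?_ hQP
    rw [Prod.dist_eq, Real.dist_eq, Real.dist_eq]
    refine max_le (Real.abs_le_sqrt ?_) (Real.abs_le_sqrt ?_)
    · simp only [Prod.fst_sub, Prod.snd_sub]; nlinarith [sq_nonneg (Q.2 - P.2)]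
    · simp only [Prod.fst_sub, Prod.snd_sub]; nlinarith [sq_nonneg (Q.1 - P.1)]
  obtain ⟨⟨h1, h2⟩, h3⟩ := hball hdist
  have h1a : (F Q).1 < R + l / 2 := h1.trans_le (by gcongr; exact min_le_left _ _)
  have h1b : (F Q).1 < R + T := h1.trans_le (by gcongr; exact min_le_right _ _)
  have h4 := hle (F Q) ⟨hQ, h1a⟩ h3
  rw [hF] at h4
  unfold barrier at h4
  have h5 : Real.log (1 / 2) ≤ Real.log (Real.cos (R / (4 * l) * ((F Q).2 - c))) :=
    Real.log_le_log (by norm_num) h2.le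
  have h6 : Real.log ((F Q).1 - R + ((F Q).1 - R))
      < (-M - K + 4 * l * Real.log (1 / 2)) / l := by
    rw [Real.log_lt_iff_lt_exp (by linarith)]
    have : Real.exp ((-M - K + 4 * l * Real.log (1 / 2)) / l) = 2 * T := by rw [hT]; ring
    linarith
  rw [lt_div_iff₀ hl] at h6
  have h7 := mul_le_mul_of_nonneg_left h5 (by linarith : 0 ≤ 4 * l)
  linarith

/-- if a sequence of solutions on `D⁻` converges (with gradients) to a
solution `u` and either (1a) every `u_n` tends to `-∞` on the concave boundary arc `C`,
or (1b) the `u_n` extend to `D(r)` with `C` a divergence line of the extensions, then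
`u` tends to `-∞` at every point of `C`. -/
theorem stmt_11 (H r : ℝ) (hH : 0 < H) (hr : 0 < r) (hr' : r < 1 / (2 * H))
    (u : ℕ → ℝ × ℝ → ℝ) (v : ℝ × ℝ → ℝ)
    (hu : ∀ n, IsCMCSolution H
      {p : ℝ × ℝ | enorm2 p < r ∧ 1 / (2 * H) < enorm2 (p - (1 / (2 * H), 0))} (u n))
    (hv : IsCMCSolution H
      {p : ℝ × ℝ | enorm2 p < r ∧ 1 / (2 * H) < enorm2 (p - (1 / (2 * H), 0))} v)
    (hconv : ∀ K : Set (ℝ × ℝ), IsCompact K →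
      K ⊆ {p : ℝ × ℝ | enorm2 p < r ∧ 1 / (2 * H) < enorm2 (p - (1 / (2 * H), 0))} →
      TendstoUniformlyOn (fun n p => u n p) v atTop K ∧
      TendstoUniformlyOn (fun n p => ((pdx (u n) p, pdy (u n) p) : ℝ × ℝ))
        (fun p => (pdx v p, pdy v p)) atTop K)
    (halt :
      (∀ n, ∀ P ∈ {p : ℝ × ℝ | enorm2 p < r ∧ enorm2 (p - (1 / (2 * H), 0)) = 1 / (2 * H)},
        ∀ M : ℝ, ∃ δ > 0,
          ∀ Q ∈ {p : ℝ × ℝ | enorm2 p < r ∧ 1 / (2 * H) < enorm2 (p - (1 / (2 * H), 0))},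
            enorm2 (Q - P) < δ → u n Q < -M) ∨
      (∃ w : ℕ → ℝ × ℝ → ℝ,
        (∀ n, IsCMCSolution H {p : ℝ × ℝ | enorm2 p < r} (w n)) ∧
        (∀ n, ∀ p ∈ {p : ℝ × ℝ | enorm2 p < r ∧
            1 / (2 * H) < enorm2 (p - (1 / (2 * H), 0))}, u n p = w n p) ∧
        IsDivergenceLine H {p : ℝ × ℝ | enorm2 p < r} w
          {p : ℝ × ℝ | enorm2 p < r ∧ enorm2 (p - (1 / (2 * H), 0)) = 1 / (2 * H)})) :
    ∀ P ∈ {p : ℝ × ℝ | enorm2 p < r ∧ enorm2 (p - (1 / (2 * H), 0)) = 1 / (2 * H)},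
      ∀ M : ℝ, ∃ δ > 0,
        ∀ Q ∈ {p : ℝ × ℝ | enorm2 p < r ∧ 1 / (2 * H) < enorm2 (p - (1 / (2 * H), 0))},
          enorm2 (Q - P) < δ → v Q < -M := by
  intro P hP M
  generalize hRdef : 1 / (2 * H) = R at *
  have hR : 0 < R := by rw [← hRdef]; positivity
  have hRH : 2 * H = 1 / R := by rw [← hRdef, one_div_one_div]
  obtain ⟨c, F, hFP, hFc, hF⟩ := exists_polar hR hP.2
  have hPr : enorm2 (polar R (R, c)) < r := by rw [← hFP, (hF P).1]; exact hP.1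
  obtain ⟨l, hl, hlR, hbox⟩ := exists_sector hR hPr
  have hD := exterior_isOpen R r
  have hboxD : ∀ x : ℝ × ℝ, x.1 ∈ Ioc R (R + l / 2) →
      x.2 ∈ Icc (c - 2 * π * l / R) (c + 2 * π * l / R) →
      polar R x ∈ {p : ℝ × ℝ | enorm2 p < r ∧ R < enorm2 (p - (R, 0))} := fun x h1 h2 =>
    ⟨hbox x ⟨h1.1.le, h1.2⟩ h2, by rw [enorm2_polar (by linarith [h1.1])]; exact h1.1⟩
  -- on the outer arc of the sector the `u n` are eventually bounded by a common constant
  set A := (fun θ => polar R (R + l / 2, θ)) ''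
    Icc (c - 2 * π * l / R) (c + 2 * π * l / R) with hA
  have hAc : IsCompact A :=
    isCompact_Icc.image ((polar_continuous R).comp (by fun_prop))
  have hAD : A ⊆ {p : ℝ × ℝ | enorm2 p < r ∧ R < enorm2 (p - (R, 0))} := by
    rintro _ ⟨θ, hθ, rfl⟩
    exact hboxD (R + l / 2, θ) ⟨by simp only; linarith, le_refl _⟩ hθ
  obtain ⟨B, hB⟩ := hAc.bddAbove_image (f := v) fun p hp =>
    (cmc_differentiable hD hv (hAD hp)).1.continuousAt.continuousWithinAt
  have hout : ∀ᶠ n in atTop, ∀ θ ∈ Icc (c - 2 * π * l / R) (c + 2 * π * l / R),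
      u n (polar R (R + l / 2, θ)) ≤ l * Real.log (l / 2) + (B + 1 - l * Real.log (l / 2)) := by
    filter_upwards [Metric.tendstoUniformlyOn_iff.1 (hconv A hAc hAD).1 1 one_pos] with n hn θ hθ
    have hmem : polar R (R + l / 2, θ) ∈ A := ⟨θ, hθ, rfl⟩
    have h1 := hn _ hmem
    have h2 := hB (mem_image_of_mem v hmem)
    rw [Real.dist_eq] at h1
    linarith [(abs_lt.1 h1).1]
  set K := B + 1 - l * Real.log (l / 2) with hK
  have hle : ∀ x : ℝ × ℝ, x.1 ∈ Ioo R (R + l / 2) →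
      x.2 ∈ Ioo (c - 2 * π * l / R) (c + 2 * π * l / R) →
      v (polar R x) ≤ barrier R l (x.1 - R) c x + K := by
    intro x hx1 hx2
    have hη : 0 < x.1 - R := by linarith [hx1.1]
    have hηl : x.1 - R ≤ l / 2 := by linarith [hx1.2]
    refine limit_le_barrier hl hlR hη hηl hD hv (fun E h1 h2 => (hconv E h1 h2).1) hboxD ?_ hx1 hx2
    intro a ha ε hε
    rcases halt with h1a | ⟨w, hw, huw, z, -, hz, -, -, φ, hφ, hlim⟩
    · refine Eventually.frequently ?_
      filter_upwards [hout] with n hn b c₁ d₁ m hab hb hc₁ hcd hd₁ hm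
      exact (flux_small_of_boundary hRH hl hlR hη hηl (hu n) (h1a n) hbox hn ha hab hb hc₁ hcd
        hd₁ hm).trans hε.le
    · rw [hRdef] at hz
      obtain rfl := divergence_center hr hR hz
      refine hφ.tendsto_atTop.frequently (Eventually.frequently ?_)
      filter_upwards [flux_small_of_divergence (w := fun j => w (φ j)) (η := x.1 - R) (K := K)
        hRH hl hlR hη hηl (fun j => hw (φ j)) hlim hbox hε, hφ.tendsto_atTop.eventually hout]
        with j hj hj' b c₁ d₁ m hab hb hc₁ hcd hd₁ hm
      refine hj (fun θ hθ => ?_) a b c₁ d₁ m ha hab hb hc₁ hcd hd₁ fun y hy => ?_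
      · rw [← huw _ _ (hAD ⟨θ, hθ, rfl⟩)]
        exact hj' θ hθ
      · have hyD := hboxD y ⟨by linarith [hy.1.1, ha.1], by linarith [hy.2.1]⟩
          ⟨by linarith [hy.1.2], by linarith [hy.2.2]⟩
        have := hm y hy
        simp only [excess] at this ⊢
        rwa [huw _ _ hyD] at this
  obtain ⟨δ, hδ, h⟩ := tendsto_bot_of_barrier hl hR hFP hFc (fun Q => (hF Q).1) hle M
  exact ⟨δ, hδ, fun Q hQ => h Q (by rw [(hF Q).2]; exact hQ.2)⟩
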